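/- Let A = (A_1,…,A_n) be a nonnegative vector in ℝ^n, D = n + A_1 + ⋯ + A_n, and 1 < p < D. Then for every continuously differentiable function f : ℝ^n → ℝ with compact support satisfying ∫_{ℝ^n_A} |f|^p x^A dx = 1, one has ∫_{ℝ^n_A} |f|^p log(|f|^p) x^A dx ≤ (D/p) · log( C_{p,n,A}^p ∫_{ℝ^n_A} |∇f|^p x^A dx ). -/

import Mathlib

open MeasureTheory Real Filter

noncomputable section

/-- The positivity region `ℝ^n_A = {x : x_i > 0 whenever A_i > 0}`. -/
def monSet {ι : Type*} [Fintype ι] (A : ι → ℝ) : Set (EuclideanSpace ℝ ι) :=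
  {x | ∀ i, 0 < A i → 0 < x i}

/-- The monomial weight `x^A = ∏ |x_i|^{A_i}`. -/
def monWeight {ι : Type*} [Fintype ι] (A : ι → ℝ) (x : EuclideanSpace ℝ ι) : ℝ :=
  ∏ i, |x i| ^ A i

/-- The homogeneous dimension `D = n + A_1 + ⋯ + A_n`. -/
def monDim {ι : Type*} [Fintype ι] (A : ι → ℝ) : ℝ :=
  (Fintype.card ι : ℝ) + ∑ i, A i

/-- `k = #{i : A_i > 0}`. -/
def monK {ι : Type*} [Fintype ι] (A : ι → ℝ) : ℕ :=
  Nat.card {i : ι // 0 < A i}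

/-- `Π(A) = [ (∏ Γ((A_i+1)/2)) / 2^k ]^{2/D}`. -/
def monPi {ι : Type*} [Fintype ι] (A : ι → ℝ) : ℝ :=
  ((∏ i, Gamma ((A i + 1) / 2)) / 2 ^ monK A) ^ (2 / monDim A)

/-- `C_{1,n,A}`, the sharp constant for `p = 1`. -/
def monC1 {ι : Type*} [Fintype ι] (A : ι → ℝ) : ℝ :=
  (monDim A)⁻¹ *
    ((2 ^ monK A * Gamma (1 + monDim A / 2)) / ∏ i, Gamma ((A i + 1) / 2)) ^ (1 / monDim A)

/-- `C_{p,n,A}` for `1 < p < D`. -/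
def monCp {ι : Type*} [Fintype ι] (A : ι → ℝ) (p : ℝ) : ℝ :=
  monC1 A * monDim A ^ (1 - 1 / p - 1 / monDim A) *
    ((p - 1) / (monDim A - p)) ^ (1 / (p / (p - 1))) *
    (p / (p - 1) * Gamma (monDim A) /
      (Gamma (monDim A / p) * Gamma (monDim A / (p / (p - 1))))) ^ (1 / monDim A)

/-!
The measure `x ^ A dx` on `ℝ^n_A` is homogeneous of degree `D`, and since its density is log-concave
on a convex cone it inherits the Prékopa–Leindler inequality from Lebesgue measure. Apply that
inequality to the `(1 - t)`-th power of `|f| ^ p` and the `t`-th power of `exp (-c ‖x‖ ^ p')`, and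
rescale by `1 - t`: to first order in `t` it bounds the entropy of `|f| ^ p` by `∫ ‖∇f‖ ^ p`.
Optimizing over `c` gives the logarithmic Sobolev inequality with its sharp constant, which depends
only on `p`, `D` and the mass of the unit ball. Log-convexity of the Gamma function shows that this
constant is at most `C_{p,n,A} ^ p`.
-/

section

open scoped ENNReal Pointwise

theorem volume_add_le_of_isCompact {K L : Set ℝ} (hK : IsCompact K) (hL : IsCompact L)
    (hK₀ : K.Nonempty) (hL₀ : L.Nonempty) : volume K + volume L ≤ volume (K + L) := by
  have hmax := hK.sSup_mem hK₀
  have hmin := hL.sInf_mem hL₀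
  set a := sSup K
  set b := sInf L
  -- `b + K` and `a + L` lie in `K + L` and meet in at most the point `a + b`.
  have h_aedisjoint : AEDisjoint volume (b +ᵥ K) (a +ᵥ L) := by
    refine measure_mono_null (t := {a + b}) ?_ (by simp)
    rintro _ ⟨⟨x, hx, rfl⟩, y, hy, hxy⟩
    have hxa : x ≤ a := le_csSup hK.bddAbove hx
    have hby : b ≤ y := csInf_le hL.bddBelow hy
    simp only [vadd_eq_add, Set.mem_singleton_iff] at hxy ⊢
    linarith
  calc volume K + volume L = volume (b +ᵥ K) + volume (a +ᵥ L) := by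
        rw [measure_vadd, measure_vadd]
    _ = volume ((b +ᵥ K) ∪ (a +ᵥ L)) :=
        (measure_union₀ (hL.vadd a).measurableSet.nullMeasurableSet h_aedisjoint).symm
    _ ≤ volume (K + L) := by
        refine measure_mono (Set.union_subset ?_ (Set.vadd_set_subset_add hmax))
        rw [add_comm K L]
        exact Set.vadd_set_subset_add hmin

theorem volume_add_le_of_add_subset {A B C : Set ℝ} (hA : MeasurableSet A) (hB : MeasurableSet B)
    (hA₀ : A.Nonempty) (hB₀ : B.Nonempty) (h : A + B ⊆ C) :
    volume A + volume B ≤ volume C := by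
  obtain ⟨a, ha⟩ := hA₀
  obtain ⟨b, hb⟩ := hB₀
  rw [hA.measure_eq_iSup_isCompact, hB.measure_eq_iSup_isCompact]
  simp only [iSup_and']
  refine ENNReal.biSup_add_biSup_le' ⟨∅, by simp⟩ ⟨∅, by simp⟩ ?_
  rintro K ⟨hKA, hK⟩ L ⟨hLB, hL⟩
  calc volume K + volume L ≤ volume (insert a K) + volume (insert b L) := by
        gcongr <;> exact Set.subset_insert _ _
    _ ≤ volume (insert a K + insert b L) :=
        volume_add_le_of_isCompact (hK.insert a) (hL.insert b) (by simp) (by simp)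
    _ ≤ volume C := measure_mono <| subset_trans
        (Set.add_subset_add (Set.insert_subset ha hKA) (Set.insert_subset hb hLB)) h

theorem brunn_minkowski_real {A B C : Set ℝ} (hA : MeasurableSet A) (hB : MeasurableSet B)
    (hA₀ : A.Nonempty) (hB₀ : B.Nonempty) {a b : ℝ} (ha : 0 < a) (hb : 0 < b)
    (h : a • A + b • B ⊆ C) :
    ENNReal.ofReal a * volume A + ENNReal.ofReal b * volume B ≤ volume C := by
  have h_scale {r : ℝ} (hr : 0 < r) (S : Set ℝ) :
      volume (r • S) = ENNReal.ofReal r * volume S := by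
    simp [Measure.addHaar_smul, abs_of_pos hr]
  rw [← h_scale ha, ← h_scale hb]
  exact volume_add_le_of_add_subset (hA.const_smul₀ _) (hB.const_smul₀ _) hA₀.smul_set
    hB₀.smul_set h

theorem ennreal_geom_mean_le_arith_mean {a b : ℝ} (ha : 0 < a) (hb : 0 < b) (hab : a + b = 1)
    (x y : ℝ≥0∞) : x ^ a * y ^ b ≤ ENNReal.ofReal a * x + ENNReal.ofReal b * y := by
  rcases eq_or_ne x ∞ with rfl | hx
  · simp [ENNReal.mul_top, ha]
  rcases eq_or_ne y ∞ with rfl | hy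
  · simp [ENNReal.mul_top, hb]
  lift x to NNReal using hx
  lift y to NNReal using hy
  lift a to NNReal using ha.le
  lift b to NNReal using hb.le
  rw [← ENNReal.coe_rpow_of_nonneg _ a.coe_nonneg, ← ENNReal.coe_rpow_of_nonneg _ b.coe_nonneg,
    ENNReal.ofReal_coe_nnreal, ENNReal.ofReal_coe_nnreal]
  exact_mod_cast NNReal.geom_mean_le_arith_mean2_weighted a b x y (by exact_mod_cast hab)

theorem lintegral_min_one_eq_lintegral_meas {α : Type*} [MeasurableSpace α] (μ : Measure α)
    [SFinite μ] {f : α → ℝ≥0∞} (hf : Measurable f) :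
    ∫⁻ x, min (f x) 1 ∂μ = ∫⁻ s in Set.Ioo (0 : ℝ) 1, μ {x | ENNReal.ofReal s < f x} := by
  let S : Set (α × ℝ) := {z | ENNReal.ofReal z.2 < f z.1}
  have hS : MeasurableSet S := measurableSet_lt (by fun_prop) (by fun_prop)
  have h_slice (x : α) :
      volume.restrict (Set.Ioo (0 : ℝ) 1) (Prod.mk x ⁻¹' S) = min (f x) 1 := by
    rw [Measure.restrict_apply (measurable_prodMk_left hS)]
    have : (Prod.mk x ⁻¹' S) ∩ Set.Ioo 0 1 = Set.Ioo 0 (min (f x) 1).toReal := by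
      ext s
      have h_ne_top : min (f x) 1 ≠ ∞ := by simp
      simp only [S, Set.mem_inter_iff, Set.mem_preimage, Set.mem_ofPred_eq, Set.mem_Ioo]
      constructor
      · rintro ⟨hs, hs0, hs1⟩
        exact ⟨hs0, (ENNReal.ofReal_lt_iff_lt_toReal hs0.le h_ne_top).1 (lt_min hs (by simpa))⟩
      · rintro ⟨hs0, hs⟩
        have := (ENNReal.ofReal_lt_iff_lt_toReal hs0.le h_ne_top).2 hs
        exact ⟨this.trans_le (min_le_left _ _), hs0, by
          simpa using this.trans_le (min_le_right _ _)⟩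
    rw [this, Real.volume_Ioo, sub_zero, ENNReal.ofReal_toReal (by simp)]
  calc ∫⁻ x, min (f x) 1 ∂μ = (μ.prod (volume.restrict (Set.Ioo (0 : ℝ) 1))) S := by
        simp only [Measure.prod_apply hS, h_slice]
    _ = ∫⁻ s in Set.Ioo (0 : ℝ) 1, μ {x | ENNReal.ofReal s < f x} :=
        Measure.prod_apply_symm hS

/-- The Prékopa–Leindler inequality, as a property of a measure `μ` on a real vector space. It holds
for Lebesgue measure and is inherited by images, products and log-concave densities. -/
def PrekopaLeindler {E : Type*} [AddCommMonoid E] [Module ℝ E] [MeasurableSpace E]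
    (μ : Measure E) : Prop :=
  ∀ ⦃a b : ℝ⦄, 0 < a → 0 < b → a + b = 1 → ∀ ⦃f g h : E → ℝ≥0∞⦄,
    Measurable f → Measurable g → Measurable h →
    (∀ x y, f x ^ a * g y ^ b ≤ h (a • x + b • y)) →
    (∫⁻ x, f x ∂μ) ^ a * (∫⁻ x, g x ∂μ) ^ b ≤ ∫⁻ x, h x ∂μ

section Real

variable {f g h : ℝ → ℝ≥0∞} {a b : ℝ}

theorem ofReal_mul_lintegral_add_le_of_iSup_eq_one (hf : Measurable f) (hg : Measurable g)
    (hh : Measurable h) (hf₁ : ⨆ x, f x = 1) (hg₁ : ⨆ x, g x = 1) (ha : 0 < a) (hb : 0 < b)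
    (hab : a + b = 1) (hfgh : ∀ x y, f x ^ a * g y ^ b ≤ h (a • x + b • y)) :
    ENNReal.ofReal a * (∫⁻ x, f x) + ENNReal.ofReal b * (∫⁻ x, g x) ≤ ∫⁻ x, h x := by
  have h_layer {u : ℝ → ℝ≥0∞} (hu : Measurable u) (hu₁ : ⨆ x, u x = 1) :
      ∫⁻ x, u x = ∫⁻ s in Set.Ioo (0 : ℝ) 1, volume {x | ENNReal.ofReal s < u x} := by
    rw [← lintegral_min_one_eq_lintegral_meas volume hu]
    exact lintegral_congr fun x => (min_eq_left (hu₁ ▸ le_iSup u x)).symm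
  have h_nonempty {u : ℝ → ℝ≥0∞} (hu₁ : ⨆ x, u x = 1) {s : ℝ} (hs : s < 1) :
      {x | ENNReal.ofReal s < u x}.Nonempty := by
    have : ENNReal.ofReal s < ⨆ x, u x := by simpa [hu₁] using hs
    exact lt_iSup_iff.1 this
  have h_meas (u : ℝ → ℝ≥0∞) : Measurable fun s : ℝ => volume {x | ENNReal.ofReal s < u x} :=
    Antitone.measurable fun s s' hs =>
      measure_mono fun x hx => (ENNReal.ofReal_le_ofReal hs).trans_lt hx
  rw [h_layer hf hf₁, h_layer hg hg₁, ← lintegral_const_mul _ (h_meas f),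
    ← lintegral_const_mul _ (h_meas g), ← lintegral_add_left ((h_meas f).const_mul _)]
  refine (setLIntegral_mono' measurableSet_Ioo fun s hs => ?_).trans
    ((lintegral_min_one_eq_lintegral_meas volume hh).symm.trans_le
      (lintegral_mono fun x => min_le_left _ _))
  refine brunn_minkowski_real (measurableSet_lt measurable_const hf)
    (measurableSet_lt measurable_const hg) (h_nonempty hf₁ hs.2) (h_nonempty hg₁ hs.2) ha hb ?_
  rintro _ ⟨_, ⟨x, hx, rfl⟩, _, ⟨y, hy, rfl⟩, rfl⟩
  refine lt_of_lt_of_le ?_ (hfgh x y)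
  calc ENNReal.ofReal s = ENNReal.ofReal s ^ a * ENNReal.ofReal s ^ b := by
        rw [← ENNReal.rpow_add a b (by simpa using hs.1) ENNReal.ofReal_ne_top, hab,
          ENNReal.rpow_one]
    _ < f x ^ a * g y ^ b :=
        ENNReal.mul_lt_mul (ENNReal.rpow_lt_rpow hx ha) (ENNReal.rpow_lt_rpow hy hb)

theorem prekopaLeindler_real_of_iSup_ne_top (hf : Measurable f) (hg : Measurable g)
    (hh : Measurable h) (hf_top : ⨆ x, f x ≠ ∞) (hg_top : ⨆ x, g x ≠ ∞) (ha : 0 < a) (hb : 0 < b)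
    (hab : a + b = 1) (hfgh : ∀ x y, f x ^ a * g y ^ b ≤ h (a • x + b • y)) :
    (∫⁻ x, f x) ^ a * (∫⁻ x, g x) ^ b ≤ ∫⁻ x, h x := by
  set M := ⨆ x, f x
  set N := ⨆ x, g x
  rcases eq_or_ne M 0 with hM | hM
  · simp [ENNReal.iSup_eq_zero.1 hM, ha]
  rcases eq_or_ne N 0 with hN | hN
  · simp [ENNReal.iSup_eq_zero.1 hN, hb]
  have h_mul (x y : ℝ≥0∞) :
      (M⁻¹ * x) ^ a * (N⁻¹ * y) ^ b = (M⁻¹ ^ a * N⁻¹ ^ b) * (x ^ a * y ^ b) := by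
    rw [ENNReal.mul_rpow_of_nonneg _ _ ha.le, ENNReal.mul_rpow_of_nonneg _ _ hb.le,
      mul_mul_mul_comm]
  have h_normalized := ofReal_mul_lintegral_add_le_of_iSup_eq_one
    (hf.const_mul M⁻¹) (hg.const_mul N⁻¹) (hh.const_mul (M⁻¹ ^ a * N⁻¹ ^ b))
    (by rw [← ENNReal.mul_iSup, ENNReal.inv_mul_cancel hM hf_top])
    (by rw [← ENNReal.mul_iSup, ENNReal.inv_mul_cancel hN hg_top]) ha hb hab fun x y => by
      rw [h_mul]
      gcongr
      exact hfgh x y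
  have h_scaled := (ennreal_geom_mean_le_arith_mean ha hb hab _ _).trans h_normalized
  rw [lintegral_const_mul _ hf, lintegral_const_mul _ hg, lintegral_const_mul _ hh, h_mul]
    at h_scaled
  refine (ENNReal.mul_le_mul_iff_right ?_ ?_).1 h_scaled
  · simp [ENNReal.rpow_eq_zero_iff, hM, hN, hf_top, hg_top]
  · exact ENNReal.mul_ne_top (ENNReal.rpow_ne_top_of_nonneg ha.le (ENNReal.inv_ne_top.2 hM))
      (ENNReal.rpow_ne_top_of_nonneg hb.le (ENNReal.inv_ne_top.2 hN))

theorem tendsto_lintegral_min_natCast {α : Type*} [MeasurableSpace α] (μ : Measure α)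
    {u : α → ℝ≥0∞} (hu : Measurable u) :
    Tendsto (fun N : ℕ => ∫⁻ x, min (u x) N ∂μ) atTop (nhds (∫⁻ x, u x ∂μ)) := by
  have h_mono : Monotone fun (N : ℕ) x => min (u x) N := fun N M hNM x =>
    min_le_min_left _ (by exact_mod_cast hNM)
  have h_iSup : ∫⁻ x, u x ∂μ = ⨆ N : ℕ, ∫⁻ x, min (u x) N ∂μ := by
    rw [← lintegral_iSup (fun N => hu.min measurable_const) h_mono]
    congr with x
    rw [← inf_iSup_eq, ENNReal.iSup_natCast, inf_top_eq]
  rw [h_iSup]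
  exact tendsto_atTop_iSup fun N M hNM => lintegral_mono (h_mono hNM)

theorem prekopaLeindler_real : PrekopaLeindler (volume : Measure ℝ) := by
  intro a b ha hb hab f g h hf hg hh hfgh
  rcases eq_or_ne (∫⁻ x, f x) 0 with hf₀ | hf₀
  · simp [hf₀, ha]
  rcases eq_or_ne (∫⁻ x, g x) 0 with hg₀ | hg₀
  · simp [hg₀, hb]
  refine le_of_tendsto (ENNReal.Tendsto.mul
    ((ENNReal.continuous_rpow_const.tendsto _).comp (tendsto_lintegral_min_natCast volume hf))
    (Or.inl (by simp [hf₀, ha.le]))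
    ((ENNReal.continuous_rpow_const.tendsto _).comp (tendsto_lintegral_min_natCast volume hg))
    (Or.inl (by simp [hg₀, hb.le]))) (Eventually.of_forall fun N => ?_)
  have h_ne_top (u : ℝ → ℝ≥0∞) : ⨆ x, min (u x) N ≠ ∞ :=
    ne_top_of_le_ne_top (ENNReal.natCast_ne_top N) (iSup_le fun x => min_le_right _ _)
  refine prekopaLeindler_real_of_iSup_ne_top (hf.min measurable_const) (hg.min measurable_const)
    hh (h_ne_top f) (h_ne_top g) ha hb hab fun x y => le_trans ?_ (hfgh x y)
  gcongr <;> exact min_le_left _ _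

end Real

namespace PrekopaLeindler

section Stability

variable {E F : Type*} [AddCommMonoid E] [Module ℝ E] [MeasurableSpace E]
  [AddCommMonoid F] [Module ℝ F] [MeasurableSpace F] {μ : Measure E} {ν : Measure F}

theorem of_measurePreserving (hμ : PrekopaLeindler μ) (L : E →ₗ[ℝ] F)
    (hL : MeasurePreserving L μ ν) : PrekopaLeindler ν := by
  intro a b ha hb hab f g h hf hg hh hfgh
  rw [← hL.lintegral_comp hf, ← hL.lintegral_comp hg, ← hL.lintegral_comp hh]
  refine hμ ha hb hab (hf.comp hL.measurable) (hg.comp hL.measurable) (hh.comp hL.measurable)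
    fun x y => ?_
  simpa using hfgh (L x) (L y)

theorem prod [SFinite ν] (hμ : PrekopaLeindler μ) (hν : PrekopaLeindler ν) :
    PrekopaLeindler (μ.prod ν) := by
  intro a b ha hb hab f g h hf hg hh hfgh
  rw [lintegral_prod _ hf.aemeasurable, lintegral_prod _ hg.aemeasurable,
    lintegral_prod _ hh.aemeasurable]
  refine hμ ha hb hab hf.lintegral_prod_right' hg.lintegral_prod_right' hh.lintegral_prod_right'
    fun x y => ?_
  exact hν ha hb hab (hf.comp measurable_prodMk_left) (hg.comp measurable_prodMk_left)
    (hh.comp measurable_prodMk_left) fun v w => hfgh (x, v) (y, w)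

theorem withDensity (hμ : PrekopaLeindler μ) {w : E → ℝ≥0∞} (hw : Measurable w)
    (h_logConcave : ∀ ⦃a b : ℝ⦄, 0 < a → 0 < b → a + b = 1 →
      ∀ x y, w x ^ a * w y ^ b ≤ w (a • x + b • y)) :
    PrekopaLeindler (μ.withDensity w) := by
  intro a b ha hb hab f g h hf hg hh hfgh
  rw [lintegral_withDensity_eq_lintegral_mul _ hw hf,
    lintegral_withDensity_eq_lintegral_mul _ hw hg, lintegral_withDensity_eq_lintegral_mul _ hw hh]
  refine hμ ha hb hab (hw.mul hf) (hw.mul hg) (hw.mul hh) fun x y => ?_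
  simp only [Pi.mul_apply, ENNReal.mul_rpow_of_nonneg _ _ ha.le,
    ENNReal.mul_rpow_of_nonneg _ _ hb.le]
  rw [mul_mul_mul_comm]
  exact mul_le_mul' (h_logConcave ha hb hab x y) (hfgh x y)

end Stability

end PrekopaLeindler

theorem prekopaLeindler_volume_fin (n : ℕ) : PrekopaLeindler (volume : Measure (Fin n → ℝ)) := by
  induction n with
  | zero =>
    intro a b _ _ _ f g h _ _ _ hfgh
    have h_eval (u : (Fin 0 → ℝ) → ℝ≥0∞) : ∫⁻ x, u x = u 0 := by
      rw [lintegral_unique, volume_pi, Measure.pi_of_empty _ 0, measure_univ, mul_one]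
      exact congrArg u (Subsingleton.elim _ _)
    simpa [h_eval] using hfgh 0 0
  | succ n ih =>
    refine (prekopaLeindler_real.prod ih).of_measurePreserving
      (Fin.consLinearEquiv ℝ fun _ : Fin (n + 1) => ℝ).toLinearMap ?_
    have h_cons : ⇑(Fin.consLinearEquiv ℝ fun _ : Fin (n + 1) => ℝ).toLinearMap =
        (MeasurableEquiv.piFinSuccAbove (fun _ : Fin (n + 1) => ℝ) 0).symm := by
      ext z i
      simp [MeasurableEquiv.piFinSuccAbove, Fin.insertNthEquiv]
    rw [h_cons]
    exact (volume_preserving_piFinSuccAbove (fun _ : Fin (n + 1) => ℝ) 0).symm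

theorem prekopaLeindler_volume {E : Type*} [NormedAddCommGroup E] [InnerProductSpace ℝ E]
    [FiniteDimensional ℝ E] [MeasurableSpace E] [BorelSpace E] :
    PrekopaLeindler (volume : Measure E) :=
  ((prekopaLeindler_volume_fin _).of_measurePreserving
    (WithLp.linearEquiv 2 ℝ (Fin (Module.finrank ℝ E) → ℝ)).symm.toLinearMap
    (PiLp.volume_preserving_toLp _)).of_measurePreserving
    (stdOrthonormalBasis ℝ E).repr.symm.toLinearEquiv.toLinearMap
    (stdOrthonormalBasis ℝ E).repr.symm.measurePreserving

section Homogeneous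

variable {E : Type*} [NormedAddCommGroup E] [NormedSpace ℝ E] [MeasurableSpace E] [BorelSpace E]
  {μ : Measure E} {D : ℝ}

/-- `μ` is positively homogeneous of degree `D`, that is `μ (a • S) = a ^ D * μ S` for `a > 0`; it
is encoded through image measures, which turn directly into changes of variables. -/
def IsHomogeneousMeasure (μ : Measure E) (D : ℝ) : Prop :=
  ∀ a : ℝ, 0 < a → μ.map (fun x => a • x) = ENNReal.ofReal (a ^ (-D)) • μ

namespace IsHomogeneousMeasure

theorem lintegral_comp_smul (hμ : IsHomogeneousMeasure μ D) {a : ℝ} (ha : 0 < a) {f : E → ℝ≥0∞}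
    (hf : Measurable f) :
    ∫⁻ x, f (a • x) ∂μ = ENNReal.ofReal (a ^ (-D)) * ∫⁻ x, f x ∂μ := by
  rw [← lintegral_map (g := fun x => a • x) hf (by fun_prop), hμ a ha, lintegral_smul_measure,
    smul_eq_mul]

theorem measure_preimage_smul (hμ : IsHomogeneousMeasure μ D) {a : ℝ} (ha : 0 < a) {S : Set E}
    (hS : MeasurableSet S) :
    μ ((fun x => a • x) ⁻¹' S) = ENNReal.ofReal (a ^ (-D)) * μ S := by
  rw [← Measure.map_apply (by fun_prop) hS, hμ a ha, Measure.smul_apply, smul_eq_mul]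

theorem measure_closedBall (hμ : IsHomogeneousMeasure μ D) {a : ℝ} (ha : 0 < a) (r : ℝ) :
    μ (Metric.closedBall 0 (r / a)) =
      ENNReal.ofReal (a ^ (-D)) * μ (Metric.closedBall 0 r) := by
  rw [← hμ.measure_preimage_smul ha measurableSet_closedBall]
  congr with x
  simp [norm_smul, abs_of_pos ha, le_div_iff₀' ha]

theorem measure_ball (hμ : IsHomogeneousMeasure μ D) {r : ℝ} (hr : 0 < r) :
    μ (Metric.ball 0 r) = ENNReal.ofReal (r ^ D) * μ (Metric.ball 0 1) := by
  have h_smul := hμ.measure_preimage_smul (inv_pos.2 hr)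
    (measurableSet_ball (x := (0 : E)) (ε := 1))
  rw [inv_rpow hr.le, rpow_neg hr.le, inv_inv] at h_smul
  rw [← h_smul]
  congr with x
  simp [norm_smul, abs_of_pos hr, inv_mul_lt_one₀ hr]

theorem measure_ball_pos (hD : IsHomogeneousMeasure μ D) (hμ : μ ≠ 0)
    {r : ℝ} (hr : 0 < r) : 0 < μ (Metric.ball 0 r) := by
  rw [hD.measure_ball hr]
  refine ENNReal.mul_pos (by simpa using rpow_pos_of_pos hr D) fun h_zero => hμ ?_
  rw [← Measure.measure_univ_eq_zero, ← Metric.iUnion_ball_nat_succ (0 : E)]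
  exact measure_iUnion_null fun k => by rw [hD.measure_ball k.cast_add_one_pos, h_zero, mul_zero]

theorem withDensity (hμ : IsHomogeneousMeasure μ D) {w : E → ℝ≥0∞} (hw : Measurable w) {d : ℝ}
    (h_hom : ∀ a : ℝ, 0 < a → ∀ x, w (a • x) = ENNReal.ofReal (a ^ d) * w x) :
    IsHomogeneousMeasure (μ.withDensity w) (D + d) := by
  intro a ha
  have h_w (x : E) : w x = ENNReal.ofReal (a ^ (-d)) * w (a • x) := by
    rw [h_hom a ha, ← mul_assoc, ← ENNReal.ofReal_mul (by positivity), ← rpow_add ha]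
    simp
  ext S hS
  have h_ind : Measurable (S.indicator w) := hw.indicator hS
  rw [Measure.map_apply (by fun_prop) hS, Measure.smul_apply, withDensity_apply _ hS,
    withDensity_apply _ (measurable_const_smul a hS),
    ← lintegral_indicator (measurable_const_smul a hS), ← lintegral_indicator hS, smul_eq_mul]
  calc ∫⁻ x, ((fun x => a • x) ⁻¹' S).indicator w x ∂μ
      = ∫⁻ x, ENNReal.ofReal (a ^ (-d)) * S.indicator w (a • x) ∂μ := by
        refine lintegral_congr fun x => ?_
        by_cases hx : a • x ∈ S <;> simp [Set.indicator, hx, ← h_w]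
    _ = ENNReal.ofReal (a ^ (-(D + d))) * ∫⁻ x, S.indicator w x ∂μ := by
        rw [lintegral_const_mul' _ _ ENNReal.ofReal_ne_top,
          hμ.lintegral_comp_smul ha h_ind, ← mul_assoc, ← ENNReal.ofReal_mul (by positivity),
          ← rpow_add ha]
        ring_nf

end IsHomogeneousMeasure

theorem isHomogeneousMeasure_addHaar [FiniteDimensional ℝ E] (μ : Measure E)
    [μ.IsAddHaarMeasure] : IsHomogeneousMeasure μ (Module.finrank ℝ E) := by
  intro a ha
  rw [Measure.map_addHaar_smul μ ha.ne', abs_of_pos (by positivity), rpow_neg ha.le, rpow_natCast]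

theorem lintegral_exp_neg_eq_lintegral_meas_lt {α : Type*} [MeasurableSpace α] (μ : Measure α)
    [SFinite μ] {g : α → ℝ} (hg : Measurable g) (hg₀ : ∀ x, 0 ≤ g x) :
    ∫⁻ x, ENNReal.ofReal (exp (-g x)) ∂μ =
      ∫⁻ v in Set.Ioi (0 : ℝ), ENNReal.ofReal (exp (-v)) * μ {x | g x < v} := by
  let G : α × ℝ → ℝ≥0∞ :=
    {z : α × ℝ | g z.1 < z.2}.indicator fun z => ENNReal.ofReal (exp (-z.2))
  have hG : Measurable G :=
    Measurable.indicator (by fun_prop) (measurableSet_lt (by fun_prop) (by fun_prop))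
  have h_tail (x : α) : ENNReal.ofReal (exp (-g x)) = ∫⁻ v in Set.Ioi (0 : ℝ), G (x, v) := by
    calc ENNReal.ofReal (exp (-g x)) = ∫⁻ v in Set.Ioi (g x), ENNReal.ofReal (exp (-v)) := by
          rw [← integral_exp_neg_Ioi, ofReal_integral_eq_lintegral_ofReal
            (integrableOn_exp_neg_Ioi (g x)) (Eventually.of_forall fun v => (exp_pos _).le)]
      _ = ∫⁻ v in Set.Ioi (0 : ℝ), (Set.Ioi (g x)).indicator
            (fun v => ENNReal.ofReal (exp (-v))) v := by
          rw [setLIntegral_indicator measurableSet_Ioi,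
            Set.inter_eq_left.2 (Set.Ioi_subset_Ioi (hg₀ x))]
  simp only [h_tail]
  rw [lintegral_lintegral_swap (f := fun x v => G (x, v)) hG.aemeasurable]
  refine lintegral_congr fun v => ?_
  rw [← lintegral_indicator_const (measurableSet_lt hg measurable_const)]
  rfl

theorem lintegral_exp_neg_mul_rpow_eq_Gamma {s : ℝ} (hs : 0 < s) :
    ∫⁻ v in Set.Ioi (0 : ℝ), ENNReal.ofReal (exp (-v) * v ^ (s - 1)) =
      ENNReal.ofReal (Gamma s) := by
  rw [Gamma_eq_integral hs, ofReal_integral_eq_lintegral_ofReal (GammaIntegral_convergent hs)]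
  filter_upwards [self_mem_ae_restrict measurableSet_Ioi] with v hv
  have : 0 < v := hv
  positivity

theorem IsHomogeneousMeasure.lintegral_exp_neg_norm_rpow [SFinite μ]
    (hμ : IsHomogeneousMeasure μ D) {c q : ℝ} (hc : 0 < c) (hq : 0 < q) (hD : 0 < 1 + D / q) :
    ∫⁻ x, ENNReal.ofReal (exp (-(c * ‖x‖ ^ q))) ∂μ =
      ENNReal.ofReal (c ^ (-(D / q)) * Gamma (1 + D / q)) * μ (Metric.ball 0 1) := by
  have h_sublevel {v : ℝ} (hv : 0 < v) :
      μ {x | c * ‖x‖ ^ q < v} =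
        ENNReal.ofReal (c ^ (-(D / q)) * v ^ (D / q)) * μ (Metric.ball 0 1) := by
    have h_ball : {x : E | c * ‖x‖ ^ q < v} = Metric.ball 0 ((v / c) ^ (1 / q)) := by
      ext x
      rw [Set.mem_ofPred_eq, mem_ball_zero_iff, one_div,
        lt_rpow_inv_iff_of_pos (norm_nonneg x) (div_pos hv hc).le hq, lt_div_iff₀' hc]
    rw [h_ball, hμ.measure_ball (by positivity), ← rpow_mul (by positivity),
      div_rpow hv.le hc.le, rpow_neg hc.le]
    congr 2
    field_simp
  rw [lintegral_exp_neg_eq_lintegral_meas_lt μ (by fun_prop) fun x => by positivity,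
    ENNReal.ofReal_mul (by positivity), ← lintegral_exp_neg_mul_rpow_eq_Gamma hD,
    ← lintegral_const_mul' _ _ ENNReal.ofReal_ne_top,
    ← lintegral_mul_const _ (by fun_prop)]
  refine setLIntegral_congr_fun measurableSet_Ioi fun v hv => ?_
  have hv : 0 < v := hv
  rw [h_sublevel hv, ← mul_assoc, ← ENNReal.ofReal_mul (by positivity),
    ← ENNReal.ofReal_mul (by positivity)]
  ring_nf

end Homogeneous

section FirstOrder

variable {E : Type*} [NormedAddCommGroup E] [NormedSpace ℝ E]

theorem eventually_abs_le_add_of_hasCompactSupport {f : E → ℝ} (hf : ContDiff ℝ 1 f)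
    (hsupp : HasCompactSupport f) {ε R : ℝ} (hε : 0 < ε) (hR : 0 ≤ R) :
    ∀ᶠ s in nhdsWithin 0 (Set.Ioi 0), ∀ x y : E, ‖y‖ ≤ R →
      |f x| ≤ |f (x + s • y)| + s * ‖y‖ * (‖fderiv ℝ f (x + s • y)‖ + ε) := by
  have h_unif : UniformContinuous (fderiv ℝ f) :=
    (hsupp.fderiv (𝕜 := ℝ)).uniformContinuous_of_continuous (hf.continuous_fderiv one_ne_zero)
  obtain ⟨η, hη, h_fderiv⟩ := Metric.uniformContinuous_iff.mp h_unif ε hε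
  filter_upwards [Ioo_mem_nhdsGT (show 0 < η / (R + 1) by positivity)] with s ⟨hs₀, hs⟩ x y hy
  set z := x + s • y with hz
  have hxz : ‖x - z‖ = s * ‖y‖ := by
    rw [hz, sub_add_cancel_left, norm_neg, norm_smul, norm_of_nonneg hs₀.le]
  have hxη : ‖x - z‖ < η := by
    rw [lt_div_iff₀ (by positivity)] at hs
    nlinarith [norm_nonneg y]
  have h_bound : ∀ w ∈ Metric.ball z η, ‖fderiv ℝ f w‖ ≤ ‖fderiv ℝ f z‖ + ε := fun w hw => by
    have h_dist := h_fderiv (Metric.mem_ball.mp hw)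
    rw [dist_eq_norm] at h_dist
    linarith [norm_le_norm_add_norm_sub' (fderiv ℝ f w) (fderiv ℝ f z)]
  have h_mean_value := (convex_ball z η).norm_image_sub_le_of_norm_fderiv_le (𝕜 := ℝ)
    (fun w _ => (hf.differentiable one_ne_zero).differentiableAt) h_bound
    (Metric.mem_ball_self hη) (mem_ball_iff_norm.2 hxη)
  rw [hxz, norm_eq_abs] at h_mean_value
  linarith [abs_sub_abs_le_abs_sub (f x) (f z)]

/-- If `u` has value `b` and gradient of norm `m` at a point, then to first order in `t` the
supremal convolution of `(u ^ p) ^ (1 - t)` with `exp (-c * ‖·‖ ^ q) ^ t` exceeds `b ^ p` there by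
the factor `exp (t * hopfLaxRate p K b m)`. Here `K` and `c` are the constants of a Young
inequality `x * r ≤ c * r ^ q + K * x ^ p`. -/
def hopfLaxRate (p K b m : ℝ) : ℝ :=
  K * (p * m / b) ^ p - log (b ^ p)

theorem rpow_mul_hopfLaxRate {p b m : ℝ} (hb : 0 < b) (hm : 0 ≤ m) (hp : 0 ≤ p) (K : ℝ) :
    b ^ p * hopfLaxRate p K b m = K * (p * m) ^ p - b ^ p * log (b ^ p) := by
  rw [hopfLaxRate, div_rpow (by positivity) hb.le]
  field_simp

theorem continuous_hopfLaxRate {X : Type*} [TopologicalSpace X] {u m : X → ℝ} {p K : ℝ}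
    (hp : 0 ≤ p) (hu : Continuous u) (hm : Continuous m) (hu₀ : ∀ x, 0 < u x) :
    Continuous fun x => hopfLaxRate p K (u x) (m x) := by
  have h_div : Continuous fun x => p * m x / u x :=
    (continuous_const.mul hm).div hu fun x => (hu₀ x).ne'
  exact (continuous_const.mul (h_div.rpow_const fun _ => Or.inr hp)).sub
    ((hu.rpow_const fun _ => Or.inr hp).log fun x => (rpow_pos_of_pos (hu₀ x) p).ne')

theorem rpow_mul_exp_le_mul_exp_hopfLaxRate {p t s r q c K a b m : ℝ} (hp : 0 < p) (ht : 0 ≤ t)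
    (ht₁ : t < 1) (hs : s = t / (1 - t)) (ha : 0 ≤ a) (hb : 0 < b)
    (hab : a ≤ b + s * r * m) (h_young : p * m / b * r ≤ c * r ^ q + K * (p * m / b) ^ p) :
    (a ^ p) ^ (1 - t) * exp (-(c * r ^ q)) ^ t ≤ b ^ p * exp (t * hopfLaxRate p K b m) := by
  have ht' : 0 < 1 - t := by linarith
  have h_exp : a ≤ exp (log b + s * r * m / b) := by
    rw [exp_add, exp_log hb]
    calc a ≤ b * (s * r * m / b + 1) := by rw [mul_add, mul_div_cancel₀ _ hb.ne']; linarith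
      _ ≤ b * exp (s * r * m / b) := by gcongr; exact add_one_le_exp _
  calc (a ^ p) ^ (1 - t) * exp (-(c * r ^ q)) ^ t
      ≤ (exp (log b + s * r * m / b) ^ p) ^ (1 - t) * exp (-(c * r ^ q)) ^ t := by gcongr
    _ = exp ((1 - t) * p * log b + t * (p * m / b * r - c * r ^ q)) := by
        rw [← exp_mul, ← exp_mul, ← exp_mul, ← exp_add, hs]
        congr 1
        field_simp
        ring
    _ ≤ exp ((1 - t) * p * log b + t * (K * (p * m / b) ^ p)) := by gcongr; linarith
    _ = b ^ p * exp (t * hopfLaxRate p K b m) := by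
        rw [hopfLaxRate, log_rpow hb, rpow_def_of_pos hb, ← exp_add]
        ring_nf

variable [MeasurableSpace E] [BorelSpace E] {μ : Measure E} {D : ℝ}

theorem PrekopaLeindler.lintegral_rpow_mul_le (hμ : PrekopaLeindler μ)
    (hD : IsHomogeneousMeasure μ D) {F G H : E → ℝ≥0∞} (hF : Measurable F) (hG : Measurable G)
    (hH : Measurable H) {t : ℝ} (ht : 0 < t) (ht₁ : t < 1)
    (hFGH : ∀ x y, F x ^ (1 - t) * G y ^ t ≤ H (x + (t / (1 - t)) • y)) :
    (∫⁻ x, F x ∂μ) ^ (1 - t) * (∫⁻ x, G x ∂μ) ^ t ≤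
      ENNReal.ofReal ((1 - t) ^ D) * ∫⁻ x, H x ∂μ := by
  have ht' : 0 < 1 - t := by linarith
  have h_scale := hD.lintegral_comp_smul (inv_pos.2 ht') hH
  rw [inv_rpow ht'.le, rpow_neg ht'.le, inv_inv] at h_scale
  rw [← h_scale]
  refine hμ ht' ht (by ring) hF hG (hH.comp (measurable_const_smul _)) fun x y => ?_
  rw [smul_add, smul_smul, smul_smul, inv_mul_cancel₀ ht'.ne', one_smul,
    inv_mul_eq_div]
  exact hFGH x y

theorem PrekopaLeindler.setIntegral_rpow_mul_le [IsFiniteMeasureOnCompacts μ]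
    (hμ : PrekopaLeindler μ) (hD : IsHomogeneousMeasure μ D) {A B C : Set E} (hA : IsCompact A)
    (hB : IsCompact B) (hC : IsCompact C) {φ ψ η : E → ℝ} (hφ : Continuous φ) (hψ : Continuous ψ)
    (hη : Continuous η) (hφ₀ : ∀ x, 0 ≤ φ x) (hψ₀ : ∀ x, 0 ≤ ψ x) (hη₀ : ∀ x, 0 ≤ η x)
    {t : ℝ} (ht : 0 < t) (ht₁ : t < 1)
    (h_mem : ∀ x ∈ A, ∀ y ∈ B, x + (t / (1 - t)) • y ∈ C)
    (h_le : ∀ x ∈ A, ∀ y ∈ B, φ x ^ (1 - t) * ψ y ^ t ≤ η (x + (t / (1 - t)) • y)) :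
    (∫ x in A, φ x ∂μ) ^ (1 - t) * (∫ y in B, ψ y ∂μ) ^ t ≤ (1 - t) ^ D * ∫ z in C, η z ∂μ := by
  have ht' : 0 < 1 - t := by linarith
  have h_meas {S : Set E} (hS : IsCompact S) {u : E → ℝ} (hu : Continuous u) :
      Measurable (S.indicator fun x => ENNReal.ofReal (u x)) :=
    hu.measurable.ennreal_ofReal.indicator hS.measurableSet
  have h_ofReal {S : Set E} (hS : IsCompact S) {u : E → ℝ} (hu : Continuous u)
      (hu₀ : ∀ x, 0 ≤ u x) :
      ∫⁻ x, S.indicator (fun x => ENNReal.ofReal (u x)) x ∂μ =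
        ENNReal.ofReal (∫ x in S, u x ∂μ) := by
    rw [lintegral_indicator hS.measurableSet, ofReal_integral_eq_lintegral_ofReal
      (hu.continuousOn.integrableOn_compact hS) (Eventually.of_forall hu₀)]
  have h_pl := hμ.lintegral_rpow_mul_le hD (h_meas hA hφ) (h_meas hB hψ) (h_meas hC hη) ht ht₁
    fun x y => by
      by_cases hx : x ∈ A
      · by_cases hy : y ∈ B
        · simp only [Set.indicator_of_mem, hx, hy, h_mem x hx y hy,
            ENNReal.ofReal_rpow_of_nonneg (hφ₀ x) ht'.le,
            ENNReal.ofReal_rpow_of_nonneg (hψ₀ y) ht.le]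
          rw [← ENNReal.ofReal_mul (rpow_nonneg (hφ₀ x) _)]
          exact ENNReal.ofReal_le_ofReal (h_le x hx y hy)
        · simp [hy, ht]
      · simp [hx, ht₁]
  have h_nonneg {S : Set E} {u : E → ℝ} (hu₀ : ∀ x, 0 ≤ u x) : 0 ≤ ∫ x in S, u x ∂μ :=
    integral_nonneg hu₀
  rw [h_ofReal hA hφ hφ₀, h_ofReal hB hψ hψ₀, h_ofReal hC hη hη₀,
    ENNReal.ofReal_rpow_of_nonneg (h_nonneg hφ₀) ht'.le,
    ENNReal.ofReal_rpow_of_nonneg (h_nonneg hψ₀) ht.le,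
    ← ENNReal.ofReal_mul (rpow_nonneg (h_nonneg hφ₀) _), ← ENNReal.ofReal_mul (by positivity)]
    at h_pl
  exact (ENNReal.ofReal_le_ofReal_iff (mul_nonneg (by positivity) (h_nonneg hη₀))).1 h_pl

theorem IsHomogeneousMeasure.rpow_mul_setIntegral_closedBall_div [ProperSpace E]
    [IsFiniteMeasureOnCompacts μ] (hD : IsHomogeneousMeasure μ D) {a ρ κ : ℝ} (ha : 0 < a)
    (ha₁ : a ≤ 1) (hρ : 0 ≤ ρ) {h : E → ℝ} (hh : Continuous h) (hκ : ∀ z, ρ < ‖z‖ → h z = κ) :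
    a ^ D * ∫ z in Metric.closedBall 0 (ρ / a), h z ∂μ =
      a ^ D * ∫ z in Metric.closedBall 0 ρ, h z ∂μ +
        (1 - a ^ D) * (κ * μ.real (Metric.closedBall 0 ρ)) := by
  have h_subset : Metric.closedBall (0 : E) ρ ⊆ Metric.closedBall 0 (ρ / a) :=
    Metric.closedBall_subset_closedBall (le_div_self hρ ha ha₁)
  have h_volume : μ.real (Metric.closedBall 0 (ρ / a)) =
      a ^ (-D) * μ.real (Metric.closedBall 0 ρ) := by
    rw [Measure.real, hD.measure_closedBall ha, ENNReal.toReal_mul,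
      ENNReal.toReal_ofReal (by positivity), Measure.real]
  have h_shell : ∫ z in Metric.closedBall 0 (ρ / a) \ Metric.closedBall 0 ρ, h z ∂μ =
      (a ^ (-D) * μ.real (Metric.closedBall 0 ρ) - μ.real (Metric.closedBall 0 ρ)) * κ := by
    rw [setIntegral_congr_fun (g := fun _ => κ)
        (measurableSet_closedBall.diff measurableSet_closedBall)
        fun z hz => hκ z (by simpa using hz.2),
      setIntegral_const, measureReal_sdiff h_subset measurableSet_closedBall
        (isCompact_closedBall 0 _).measure_ne_top, h_volume, smul_eq_mul]
  rw [setIntegral_sdiff measurableSet_closedBall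
    (hh.continuousOn.integrableOn_compact (isCompact_closedBall 0 _)) h_subset,
    sub_eq_iff_eq_add'] at h_shell
  rw [h_shell, rpow_neg ha.le]
  field_simp

end FirstOrder

section LogSobolev

theorem hasDerivAt_le_of_eventually_le {φ ψ : ℝ → ℝ} {φ' ψ' x : ℝ} (hφ : HasDerivAt φ φ' x)
    (hψ : HasDerivAt ψ ψ' x) (h_eq : φ x = ψ x)
    (h_le : ∀ᶠ t in nhdsWithin x (Set.Ioi x), φ t ≤ ψ t) : φ' ≤ ψ' := by
  have h_slope {u : ℝ → ℝ} {u' : ℝ} (hu : HasDerivAt u u' x) :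
      Tendsto (slope u x) (nhdsWithin x (Set.Ioi x)) (nhds u') :=
    (hasDerivWithinAt_iff_tendsto_slope' (by simp)).1 hu.hasDerivWithinAt
  refine le_of_tendsto_of_tendsto (h_slope hφ) (h_slope hψ) ?_
  filter_upwards [h_le, self_mem_nhdsWithin] with t ht hxt
  have hxt : 0 < t - x := sub_pos.2 hxt
  rw [slope_def_field, slope_def_field, h_eq]
  gcongr

theorem hasDerivAt_setIntegral_mul_exp {X : Type*} [TopologicalSpace X] [T2Space X]
    [MeasurableSpace X] [BorelSpace X] {μ : Measure X} [IsFiniteMeasureOnCompacts μ] {S : Set X}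
    (hS : IsCompact S) {w r : X → ℝ} (hw : Continuous w) (hr : Continuous r) :
    HasDerivAt (fun t => ∫ x in S, w x * exp (t * r x) ∂μ) (∫ x in S, w x * r x ∂μ) 0 := by
  have h_integrable {u : X → ℝ} (hu : Continuous u) : IntegrableOn u S μ :=
    hu.continuousOn.integrableOn_compact hS
  have h_deriv := (hasDerivAt_integral_of_dominated_loc_of_deriv_le (μ := μ.restrict S)
    (F := fun t x => w x * exp (t * r x)) (F' := fun t x => w x * (exp (t * r x) * r x))
    (bound := fun x => |w x| * (exp |r x| * |r x|)) (x₀ := 0)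
    (Metric.ball_mem_nhds 0 one_pos) (Eventually.of_forall fun t => (h_integrable (by fun_prop)).1)
    (h_integrable (by fun_prop)) (h_integrable (by fun_prop)).1
    (Eventually.of_forall fun x t ht => ?_) (h_integrable (by fun_prop))
    (Eventually.of_forall fun x t _ =>
      (((hasDerivAt_mul_const (r x)).exp).const_mul (w x)))).2
  · simpa using h_deriv
  · have ht : |t| ≤ 1 := by simpa using (mem_ball_zero_iff.1 ht).le
    rw [norm_eq_abs, abs_mul, abs_mul, abs_exp]
    gcongr
    calc t * r x ≤ |t| * |r x| := (le_abs_self _).trans (abs_mul _ _).le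
      _ ≤ |r x| := mul_le_of_le_one_left (abs_nonneg _) ht

variable {E : Type*} [NormedAddCommGroup E] [NormedSpace ℝ E] [ProperSpace E] [MeasurableSpace E]
  [BorelSpace E] {μ : Measure E} [IsFiniteMeasureOnCompacts μ] {D : ℝ}

theorem setIntegral_closedBall_pos (hD : IsHomogeneousMeasure μ D) (hμ : μ ≠ 0) {r : ℝ}
    (hr : 0 < r) {u : E → ℝ} (hu : Continuous u) (hu₀ : ∀ x, 0 < u x) :
    0 < ∫ x in Metric.closedBall 0 r, u x ∂μ := by
  rw [setIntegral_pos_iff_support_of_nonneg_ae (Eventually.of_forall fun x => (hu₀ x).le)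
    (hu.continuousOn.integrableOn_compact (isCompact_closedBall 0 r)),
    Function.support_eq_univ fun x => (hu₀ x).ne', Set.univ_inter]
  exact (hD.measure_ball_pos hμ hr).trans_le (measure_mono Metric.ball_subset_closedBall)

variable {u m : E → ℝ} {p q c K ρ R b b' : ℝ}

theorem eventually_rpow_mul_rpow_le (hμ : PrekopaLeindler μ) (hD : IsHomogeneousMeasure μ D)
    (hp : 0 < p) (hq : 0 < q) (hR : 0 ≤ R) (hRρ : R ≤ ρ)
    (h_young : ∀ x r : ℝ, 0 ≤ x → 0 ≤ r → x * r ≤ c * r ^ q + K * x ^ p)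
    (hu : Continuous u) (hm : Continuous m) (hu₀ : ∀ x, 0 < u x) (hm₀ : ∀ x, 0 ≤ m x)
    (h_outside : ∀ z, ρ < ‖z‖ → u z = b ∧ m z = b')
    (h_disp : ∀ᶠ s in nhdsWithin 0 (Set.Ioi 0), ∀ x y : E, ‖y‖ ≤ R →
      u x ≤ u (x + s • y) + s * ‖y‖ * m (x + s • y)) :
    ∀ᶠ t in nhdsWithin 0 (Set.Ioi 0),
      (∫ x in Metric.closedBall 0 ρ, u x ^ p ∂μ) ^ (1 - t) *
          (∫ y in Metric.closedBall 0 R, exp (-(c * ‖y‖ ^ q)) ∂μ) ^ t ≤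
        (1 - t) ^ D *
            ∫ z in Metric.closedBall 0 ρ, u z ^ p * exp (t * hopfLaxRate p K (u z) (m z)) ∂μ +
          (1 - (1 - t) ^ D) *
            (b ^ p * exp (t * hopfLaxRate p K b b') * μ.real (Metric.closedBall 0 ρ)) := by
  have h_tendsto : Tendsto (fun t : ℝ => t / (1 - t)) (nhdsWithin 0 (Set.Ioi 0))
      (nhdsWithin 0 (Set.Ioi 0)) := by
    refine tendsto_nhdsWithin_iff.2 ⟨?_, ?_⟩
    · have : ContinuousAt (fun t : ℝ => t / (1 - t)) 0 := by fun_prop (disch := norm_num)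
      simpa [ContinuousAt] using this.tendsto.mono_left nhdsWithin_le_nhds
    · filter_upwards [Ioo_mem_nhdsGT one_pos] with t ht
      exact div_pos ht.1 (sub_pos.2 ht.2)
  filter_upwards [Ioo_mem_nhdsGT one_pos, h_tendsto.eventually h_disp] with t ⟨ht, ht₁⟩ ht_disp
  have ht' : 0 < 1 - t := by linarith
  have h_cont : Continuous fun z => u z ^ p * exp (t * hopfLaxRate p K (u z) (m z)) :=
    (hu.rpow_const fun x => Or.inr hp.le).mul
      (continuous_const.mul (continuous_hopfLaxRate hp.le hu hm hu₀)).rexp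
  rw [← hD.rpow_mul_setIntegral_closedBall_div ht' (by linarith) (hR.trans hRρ) h_cont
    fun z hz => by rw [(h_outside z hz).1, (h_outside z hz).2]]
  refine hμ.setIntegral_rpow_mul_le hD (isCompact_closedBall 0 _) (isCompact_closedBall 0 _)
    (isCompact_closedBall 0 _) (hu.rpow_const fun x => Or.inr hp.le)
    (by fun_prop (disch := exact hq.le)) h_cont
    (fun x => (rpow_pos_of_pos (hu₀ x) p).le) (fun y => (exp_pos _).le)
    (fun z => mul_nonneg (rpow_pos_of_pos (hu₀ z) p).le (exp_pos _).le) ht ht₁ ?_ ?_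
  · intro x hx y hy
    rw [mem_closedBall_zero_iff] at hx hy ⊢
    calc ‖x + (t / (1 - t)) • y‖ ≤ ‖x‖ + t / (1 - t) * ‖y‖ :=
          (norm_add_le _ _).trans_eq (by rw [norm_smul, norm_of_nonneg (by positivity)])
      _ ≤ ρ + t / (1 - t) * ρ := by gcongr; exact hy.trans hRρ
      _ = ρ / (1 - t) := by field_simp; ring
  · intro x _ y hy
    have hz₀ := hu₀ (x + (t / (1 - t)) • y)
    refine rpow_mul_exp_le_mul_exp_hopfLaxRate hp ht.le ht₁ rfl (hu₀ x).le hz₀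
      (ht_disp x y (mem_closedBall_zero_iff.1 hy)) (h_young _ _ ?_ (norm_nonneg y))
    have := hm₀ (x + (t / (1 - t)) • y)
    positivity

theorem mul_log_add_le_setIntegral (hμ : PrekopaLeindler μ) (hD : IsHomogeneousMeasure μ D)
    (hμ₀ : μ ≠ 0) (hp : 0 < p) (hq : 0 < q) (hR : 0 < R) (hRρ : R ≤ ρ)
    (h_young : ∀ x r : ℝ, 0 ≤ x → 0 ≤ r → x * r ≤ c * r ^ q + K * x ^ p)
    (hu : Continuous u) (hm : Continuous m) (hu₀ : ∀ x, 0 < u x) (hm₀ : ∀ x, 0 ≤ m x)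
    (h_outside : ∀ z, ρ < ‖z‖ → u z = b ∧ m z = b')
    (h_disp : ∀ᶠ s in nhdsWithin 0 (Set.Ioi 0), ∀ x y : E, ‖y‖ ≤ R →
      u x ≤ u (x + s • y) + s * ‖y‖ * m (x + s • y)) :
    (∫ x in Metric.closedBall 0 ρ, u x ^ p ∂μ) *
          (log (∫ y in Metric.closedBall 0 R, exp (-(c * ‖y‖ ^ q)) ∂μ) + D) -
        (∫ x in Metric.closedBall 0 ρ, u x ^ p ∂μ) *
          log (∫ x in Metric.closedBall 0 ρ, u x ^ p ∂μ) ≤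
      (∫ x in Metric.closedBall 0 ρ, (K * (p * m x) ^ p - u x ^ p * log (u x ^ p)) ∂μ) +
        D * (b ^ p * μ.real (Metric.closedBall 0 ρ)) := by
  have h_cont : Continuous fun x => u x ^ p := hu.rpow_const fun x => Or.inr hp.le
  have h_rate := hasDerivAt_setIntegral_mul_exp (μ := μ) (isCompact_closedBall 0 ρ) h_cont
    (continuous_hopfLaxRate (K := K) hp.le hu hm hu₀)
  have hN := setIntegral_closedBall_pos hD hμ₀ (hR.trans_le hRρ) h_cont
    fun x => rpow_pos_of_pos (hu₀ x) p
  have hZ := setIntegral_closedBall_pos hD hμ₀ hR (u := fun y => exp (-(c * ‖y‖ ^ q)))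
    (by fun_prop (disch := exact hq.le)) fun y => exp_pos _
  set N := ∫ x in Metric.closedBall 0 ρ, u x ^ p ∂μ
  set Z := ∫ y in Metric.closedBall 0 R, exp (-(c * ‖y‖ ^ q)) ∂μ
  have h_sub : HasDerivAt (fun t : ℝ => 1 - t) (-1) 0 := by
    simpa using (hasDerivAt_id (0 : ℝ)).const_sub 1
  have h_pow : HasDerivAt (fun t : ℝ => (1 - t) ^ D) (-D) 0 := by
    simpa using h_sub.rpow_const (p := D) (Or.inl (by norm_num))
  have h_left : HasDerivAt (fun t : ℝ => N ^ (1 - t) * Z ^ t) (N * (log Z - log N)) 0 := by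
    refine ((h_sub.const_rpow hN).mul ((hasDerivAt_id 0).const_rpow hZ)).congr_deriv ?_
    simp only [sub_zero, rpow_one, id_eq, rpow_zero]
    ring
  have h_tail : HasDerivAt (fun t => b ^ p * exp (t * hopfLaxRate p K b b') *
      μ.real (Metric.closedBall 0 ρ))
      (b ^ p * hopfLaxRate p K b b' * μ.real (Metric.closedBall 0 ρ)) 0 := by
    simpa using (((hasDerivAt_mul_const (x := 0) (hopfLaxRate p K b b')).exp).const_mul
      (b ^ p)).mul_const (μ.real (Metric.closedBall 0 ρ))
  have h_compare := hasDerivAt_le_of_eventually_le h_left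
    ((h_pow.mul h_rate).add ((h_pow.const_sub 1).mul h_tail)) (by simp [N])
    (eventually_rpow_mul_rpow_le hμ hD hp hq hR.le hRρ h_young hu hm hu₀ hm₀ h_outside h_disp)
  simp only [rpow_mul_hopfLaxRate (hu₀ _) (hm₀ _) hp.le] at h_compare
  simp only [zero_mul, exp_zero, mul_one, neg_mul, sub_zero, one_rpow, one_mul, neg_neg, sub_self,
    add_zero] at h_compare
  linarith

end LogSobolev

section CompactSupport

variable {E : Type*} [NormedAddCommGroup E] [NormedSpace ℝ E] [ProperSpace E] [MeasurableSpace E]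
  [BorelSpace E] {μ : Measure E} [IsFiniteMeasureOnCompacts μ] {D p q c K ρ R : ℝ} {f : E → ℝ}

theorem mul_log_add_le_setIntegral_abs_add (hμ : PrekopaLeindler μ)
    (hD : IsHomogeneousMeasure μ D) (hμ₀ : μ ≠ 0) (hp : 0 < p) (hq : 0 < q) (hR : 0 < R)
    (hRρ : R ≤ ρ) (h_young : ∀ x r : ℝ, 0 ≤ x → 0 ≤ r → x * r ≤ c * r ^ q + K * x ^ p)
    (hf : ContDiff ℝ 1 f) (hsupp : HasCompactSupport f)
    (hsupp_ball : tsupport f ⊆ Metric.closedBall 0 ρ) {ε : ℝ} (hε : 0 < ε) :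
    (∫ x in Metric.closedBall 0 ρ, (|f x| + ε) ^ p ∂μ) *
          (log (∫ y in Metric.closedBall 0 R, exp (-(c * ‖y‖ ^ q)) ∂μ) + D) -
        (∫ x in Metric.closedBall 0 ρ, (|f x| + ε) ^ p ∂μ) *
          log (∫ x in Metric.closedBall 0 ρ, (|f x| + ε) ^ p ∂μ) ≤
      (∫ x in Metric.closedBall 0 ρ,
          (K * (p * (‖fderiv ℝ f x‖ + ε)) ^ p - (|f x| + ε) ^ p * log ((|f x| + ε) ^ p)) ∂μ) +
        D * (ε ^ p * μ.real (Metric.closedBall 0 ρ)) := by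
  refine mul_log_add_le_setIntegral (u := fun x => |f x| + ε) (m := fun x => ‖fderiv ℝ f x‖ + ε)
    (b' := ε) hμ hD hμ₀ hp hq hR hRρ h_young (hf.continuous.abs.add continuous_const)
    ((hf.continuous_fderiv one_ne_zero).norm.add continuous_const) (fun x => by positivity)
    (fun x => by positivity) (fun z hz => ?_) ?_
  · have hz : z ∉ tsupport f := fun h_mem =>
      (mem_closedBall_zero_iff.1 (hsupp_ball h_mem)).not_gt hz
    simp [image_eq_zero_of_notMem_tsupport hz, fderiv_of_notMem_tsupport (𝕜 := ℝ) hz]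
  · filter_upwards [eventually_abs_le_add_of_hasCompactSupport hf hsupp hε hR.le] with s hs x y hy
    linarith [hs x y hy]

theorem mul_log_add_le_setIntegral_abs (hμ : PrekopaLeindler μ)
    (hD : IsHomogeneousMeasure μ D) (hμ₀ : μ ≠ 0) (hp : 0 < p) (hq : 0 < q) (hR : 0 < R)
    (hRρ : R ≤ ρ) (h_young : ∀ x r : ℝ, 0 ≤ x → 0 ≤ r → x * r ≤ c * r ^ q + K * x ^ p)
    (hf : ContDiff ℝ 1 f) (hsupp : HasCompactSupport f)
    (hsupp_ball : tsupport f ⊆ Metric.closedBall 0 ρ) :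
    (∫ x in Metric.closedBall 0 ρ, |f x| ^ p ∂μ) *
          (log (∫ y in Metric.closedBall 0 R, exp (-(c * ‖y‖ ^ q)) ∂μ) + D) -
        (∫ x in Metric.closedBall 0 ρ, |f x| ^ p ∂μ) *
          log (∫ x in Metric.closedBall 0 ρ, |f x| ^ p ∂μ) ≤
      ∫ x in Metric.closedBall 0 ρ,
        (K * (p * ‖fderiv ℝ f x‖) ^ p - |f x| ^ p * log (|f x| ^ p)) ∂μ := by
  have h_compact := isCompact_closedBall (0 : E) ρ
  have h_abs : Continuous fun z : ℝ × E => |f z.2| + z.1 :=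
    (hf.continuous.comp continuous_snd).abs.add continuous_fst
  have h_grad : Continuous fun z : ℝ × E => ‖fderiv ℝ f z.2‖ + z.1 :=
    ((hf.continuous_fderiv one_ne_zero).comp continuous_snd).norm.add continuous_fst
  have h_pow : Continuous fun z : ℝ × E => (|f z.2| + z.1) ^ p :=
    h_abs.rpow_const fun _ => Or.inr hp.le
  have h_mass : Continuous fun ε : ℝ => ∫ x in Metric.closedBall 0 ρ, (|f x| + ε) ^ p ∂μ :=
    continuous_parametric_integral_of_continuous h_pow h_compact
  have h_energy : Continuous fun ε : ℝ => ∫ x in Metric.closedBall 0 ρ,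
      (K * (p * (‖fderiv ℝ f x‖ + ε)) ^ p - (|f x| + ε) ^ p * log ((|f x| + ε) ^ p)) ∂μ :=
    continuous_parametric_integral_of_continuous
      ((continuous_const.mul ((continuous_const.mul h_grad).rpow_const fun _ => Or.inr hp.le)).sub
        (continuous_mul_log.comp h_pow)) h_compact
  have h_error : Continuous fun ε : ℝ => D * (ε ^ p * μ.real (Metric.closedBall 0 ρ)) := by
    fun_prop (disch := exact hp.le)
  have h_limit := le_of_tendsto_of_tendsto
    ((((h_mass.mul continuous_const).sub (continuous_mul_log.comp h_mass)).tendsto 0).mono_left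
      nhdsWithin_le_nhds) (((h_energy.add h_error).tendsto 0).mono_left nhdsWithin_le_nhds)
    (eventually_nhdsWithin_of_forall fun ε hε => mul_log_add_le_setIntegral_abs_add hμ hD hμ₀ hp
      hq hR hRρ h_young hf hsupp hsupp_ball (Set.mem_Ioi.1 hε))
  simpa [zero_rpow hp.ne'] using h_limit

theorem log_setIntegral_closedBall_add_le (hμ : PrekopaLeindler μ) (hD : IsHomogeneousMeasure μ D)
    (hμ₀ : μ ≠ 0) (hp : 0 < p) (hq : 0 < q) (hR : 0 < R)
    (h_young : ∀ x r : ℝ, 0 ≤ x → 0 ≤ r → x * r ≤ c * r ^ q + K * x ^ p)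
    (hf : ContDiff ℝ 1 f) (hsupp : HasCompactSupport f) (h_norm : ∫ x, |f x| ^ p ∂μ = 1) :
    log (∫ y in Metric.closedBall 0 R, exp (-(c * ‖y‖ ^ q)) ∂μ) + D ≤
      ∫ x, (K * (p * ‖fderiv ℝ f x‖) ^ p - |f x| ^ p * log (|f x| ^ p)) ∂μ := by
  obtain ⟨ρ₀, hρ₀⟩ := hsupp.isCompact.isBounded.subset_closedBall 0
  have hρ : tsupport f ⊆ Metric.closedBall 0 (max ρ₀ R) :=
    hρ₀.trans (Metric.closedBall_subset_closedBall (le_max_left _ _))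
  have h_zero {z : E} (hz : z ∉ Metric.closedBall 0 (max ρ₀ R)) : f z = 0 ∧ fderiv ℝ f z = 0 :=
    ⟨image_eq_zero_of_notMem_tsupport fun h => hz (hρ h),
      fderiv_of_notMem_tsupport ℝ fun h => hz (hρ h)⟩
  have h_ball := mul_log_add_le_setIntegral_abs hμ hD hμ₀ hp hq hR (le_max_right ρ₀ R) h_young hf
    hsupp hρ
  have h_full {φ : ℝ → ℝ → ℝ} (hφ : φ 0 0 = 0) :
      ∫ x in Metric.closedBall 0 (max ρ₀ R), φ (f x) ‖fderiv ℝ f x‖ ∂μ =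
        ∫ x, φ (f x) ‖fderiv ℝ f x‖ ∂μ :=
    setIntegral_eq_integral_of_forall_compl_eq_zero fun z hz => by
      rw [(h_zero hz).1, (h_zero hz).2, norm_zero, hφ]
  rw [h_full (φ := fun a _ => |a| ^ p) (by simp [hp.ne']), h_norm,
    h_full (φ := fun a m => K * (p * m) ^ p - |a| ^ p * log (|a| ^ p)) (by simp [hp.ne'])] at h_ball
  simpa using h_ball

theorem log_integral_exp_add_le (hμ : PrekopaLeindler μ) (hD : IsHomogeneousMeasure μ D)
    (hμ₀ : μ ≠ 0) (hp : 0 < p) (hq : 0 < q)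
    (h_young : ∀ x r : ℝ, 0 ≤ x → 0 ≤ r → x * r ≤ c * r ^ q + K * x ^ p)
    (h_int : Integrable (fun y => exp (-(c * ‖y‖ ^ q))) μ)
    (hf : ContDiff ℝ 1 f) (hsupp : HasCompactSupport f) (h_norm : ∫ x, |f x| ^ p ∂μ = 1) :
    log (∫ y, exp (-(c * ‖y‖ ^ q)) ∂μ) + D ≤
      ∫ x, (K * (p * ‖fderiv ℝ f x‖) ^ p - |f x| ^ p * log (|f x| ^ p)) ∂μ := by
  have h_univ : ⋃ k : ℕ, Metric.closedBall (0 : E) k = Set.univ := Metric.iUnion_closedBall_nat 0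
  have h_mono : Monotone fun k : ℕ => Metric.closedBall (0 : E) k := fun j k hjk =>
    Metric.closedBall_subset_closedBall (Nat.cast_le.2 hjk)
  have h_tendsto := tendsto_setIntegral_of_monotone (fun _ => measurableSet_closedBall) h_mono
    h_int.integrableOn
  rw [h_univ, setIntegral_univ] at h_tendsto
  have h_pos : 0 < ∫ y, exp (-(c * ‖y‖ ^ q)) ∂μ :=
    (setIntegral_closedBall_pos hD hμ₀ one_pos (by fun_prop (disch := exact hq.le))
      fun y => exp_pos _).trans_le (setIntegral_le_integral h_int
        (Eventually.of_forall fun y => (exp_pos _).le))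
  refine le_of_tendsto ((h_tendsto.log h_pos.ne').add_const D) ?_
  filter_upwards [eventually_gt_atTop 0] with k hk
  exact log_setIntegral_closedBall_add_le hμ hD hμ₀ hp hq (Nat.cast_pos.2 hk) h_young hf hsupp
    h_norm

end CompactSupport

section SharpInequality

theorem mul_le_exp_mul_rpow_add_exp_mul_rpow {p q : ℝ} (hpq : p.HolderConjugate q) (m : ℝ)
    {x r : ℝ} (hx : 0 ≤ x) (hr : 0 ≤ r) :
    x * r ≤ exp (q * m) / q * r ^ q + exp (-(p * m)) / p * x ^ p := by
  calc x * r = exp (-m) * x * (exp m * r) := by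
        rw [mul_mul_mul_comm, ← exp_add, neg_add_cancel, exp_zero, one_mul]
    _ ≤ (exp (-m) * x) ^ p / p + (exp m * r) ^ q / q :=
        young_inequality_of_nonneg (by positivity) (by positivity) hpq
    _ = exp (q * m) / q * r ^ q + exp (-(p * m)) / p * x ^ p := by
        rw [mul_rpow (exp_pos _).le hx, mul_rpow (exp_pos _).le hr, ← exp_mul, ← exp_mul]
        ring_nf

theorem pos_and_le_of_forall_le_add_mul_exp {D p κ a e : ℝ} (hD : 0 < D) (hp : 0 < p) (ha : 0 ≤ a)
    (h : ∀ m : ℝ, e ≤ κ + D * m + a * exp (-(p * m))) :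
    0 < a ∧ e ≤ κ + D / p * (1 + log (p * a / D)) := by
  have ha₀ : 0 < a := ha.lt_of_ne' fun h_zero => by
    have h_low := h ((e - κ - 1) / D)
    rw [h_zero, zero_mul, mul_div_cancel₀ _ hD.ne'] at h_low
    linarith
  refine ⟨ha₀, (h (log (p * a / D) / p)).trans_eq ?_⟩
  rw [mul_div_cancel₀ _ hp.ne', exp_neg, exp_log (by positivity)]
  field_simp
  ring

variable {E : Type*} [NormedAddCommGroup E] [NormedSpace ℝ E] [MeasurableSpace E] [BorelSpace E]
  {μ : Measure E} {D p q : ℝ} {f : E → ℝ}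

theorem IsHomogeneousMeasure.integral_exp_neg_norm_rpow [SFinite μ]
    (hμ : IsHomogeneousMeasure μ D) {c : ℝ} (hc : 0 < c) (hq : 0 < q) (hD : 0 < 1 + D / q) :
    ∫ x, exp (-(c * ‖x‖ ^ q)) ∂μ =
      c ^ (-(D / q)) * Gamma (1 + D / q) * μ.real (Metric.ball 0 1) := by
  rw [integral_eq_lintegral_of_nonneg_ae (Eventually.of_forall fun x => (exp_pos _).le)
    (Measurable.aestronglyMeasurable (by fun_prop)), hμ.lintegral_exp_neg_norm_rpow hc hq hD,
    ENNReal.toReal_mul, ENNReal.toReal_ofReal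
      (mul_nonneg (rpow_nonneg hc.le _) (Gamma_pos_of_pos hD).le), Measure.real]

theorem IsHomogeneousMeasure.integrable_exp_neg_norm_rpow [SFinite μ]
    (hμ : IsHomogeneousMeasure μ D) {c : ℝ} (hc : 0 < c) (hq : 0 < q) (hD : 0 < 1 + D / q)
    (h_ball : μ (Metric.ball 0 1) ≠ ∞) : Integrable (fun x => exp (-(c * ‖x‖ ^ q))) μ := by
  rw [← lintegral_ofReal_ne_top_iff_integrable (Measurable.aestronglyMeasurable (by fun_prop))
    (Eventually.of_forall fun x => (exp_pos _).le), hμ.lintegral_exp_neg_norm_rpow hc hq hD]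
  exact ENNReal.mul_ne_top ENNReal.ofReal_ne_top h_ball

/-- The sharp constant of the `L ^ p` logarithmic Sobolev inequality for a measure that satisfies
the Prékopa–Leindler inequality, is homogeneous of degree `D` and gives mass `β` to the unit
ball. -/
def logSobolevConst (p D β : ℝ) : ℝ :=
  p / D * ((p - 1) / exp 1) ^ (p - 1) * (Gamma (1 + D / conjExponent p) * β) ^ (-(p / D))

theorem logSobolevConst_pos {β : ℝ} (hp : 1 < p) (hD : 0 < D) (hβ : 0 < β) :
    0 < logSobolevConst p D β := by
  have hq := (HolderConjugate.conjExponent hp).symm.pos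
  have h_base : 0 < (p - 1) / exp 1 := div_pos (sub_pos.2 hp) (exp_pos 1)
  have h_Gamma : 0 < Gamma (1 + D / conjExponent p) := Gamma_pos_of_pos (by positivity)
  exact mul_pos (mul_pos (div_pos (by linarith) hD) (rpow_pos_of_pos h_base _))
    (rpow_pos_of_pos (mul_pos h_Gamma hβ) _)

theorem log_logSobolevConst {β : ℝ} (hp : 1 < p) (hD : 0 < D) (hβ : 0 < β) :
    log (logSobolevConst p D β) = log (p / D) + (p - 1) * (log (p - 1) - 1) -
      p / D * (log (Gamma (1 + D / conjExponent p)) + log β) := by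
  have hp' : 0 < p - 1 := by linarith
  have hq := (HolderConjugate.conjExponent hp).symm.pos
  have h_Gamma : 0 < Gamma (1 + D / conjExponent p) := Gamma_pos_of_pos (by positivity)
  rw [logSobolevConst, log_mul (by positivity) (by positivity),
    log_mul (by positivity) (by positivity), log_rpow (by positivity), log_rpow (by positivity),
    log_mul h_Gamma.ne' hβ.ne', log_div hp'.ne' (exp_pos 1).ne', log_exp]
  ring

variable [ProperSpace E] [IsFiniteMeasureOnCompacts μ]

theorem integral_rpow_mul_log_le_add_exp (hμ : PrekopaLeindler μ) (hD : IsHomogeneousMeasure μ D)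
    (hμ₀ : μ ≠ 0) (hD₀ : 0 < D) (hpq : p.HolderConjugate q) (hf : ContDiff ℝ 1 f)
    (hsupp : HasCompactSupport f) (h_norm : ∫ x, |f x| ^ p ∂μ = 1) (m : ℝ) :
    ∫ x, |f x| ^ p * log (|f x| ^ p) ∂μ ≤
      -(D / q * log q) - log (Gamma (1 + D / q) * μ.real (Metric.ball 0 1)) - D + D * m +
        p ^ (p - 1) * (∫ x, ‖fderiv ℝ f x‖ ^ p ∂μ) * exp (-(p * m)) := by
  have hp := hpq.pos
  have hq := hpq.symm.pos
  have hΓ : 0 < 1 + D / q := by positivity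
  have hβ : 0 < μ.real (Metric.ball 0 1) := ENNReal.toReal_pos (hD.measure_ball_pos hμ₀ one_pos).ne'
    measure_ball_lt_top.ne
  have h_main := log_integral_exp_add_le hμ hD hμ₀ hp hq
    (fun x r => mul_le_exp_mul_rpow_add_exp_mul_rpow hpq m)
    (hD.integrable_exp_neg_norm_rpow (by positivity) hq hΓ measure_ball_lt_top.ne) hf hsupp h_norm
  have h_energy : Integrable (fun x => exp (-(p * m)) / p * (p * ‖fderiv ℝ f x‖) ^ p) μ := by
    refine Continuous.integrable_of_hasCompactSupport ?_ ?_
    · have := hf.continuous_fderiv one_ne_zero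
      fun_prop (disch := exact hp.le)
    · exact (hsupp.fderiv ℝ).comp_left (g := fun v => exp (-(p * m)) / p * (p * ‖v‖) ^ p)
        (by simp [hp.ne'])
  have h_entropy : Integrable (fun x => |f x| ^ p * log (|f x| ^ p)) μ := by
    refine Continuous.integrable_of_hasCompactSupport ?_ ?_
    · exact continuous_mul_log.comp (hf.continuous.abs.rpow_const fun _ => Or.inr hp.le)
    · exact hsupp.comp_left (g := fun v => |v| ^ p * log (|v| ^ p)) (by simp [hp.ne'])
  rw [hD.integral_exp_neg_norm_rpow (by positivity) hq hΓ, integral_sub h_energy h_entropy,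
    mul_assoc, log_mul (by positivity) (mul_pos (Gamma_pos_of_pos hΓ) hβ).ne',
    log_rpow (by positivity), log_div (exp_pos _).ne' hq.ne', log_exp] at h_main
  have h_scale : ∫ x, exp (-(p * m)) / p * (p * ‖fderiv ℝ f x‖) ^ p ∂μ =
      p ^ (p - 1) * (∫ x, ‖fderiv ℝ f x‖ ^ p ∂μ) * exp (-(p * m)) := by
    simp only [mul_rpow hp.le (norm_nonneg _), integral_const_mul]
    rw [rpow_sub_one hp.ne']
    ring
  have h_cancel : D / q * (q * m) = D * m := by field_simp
  linarith

theorem integral_rpow_mul_log_le_logSobolevConst (hμ : PrekopaLeindler μ)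
    (hD : IsHomogeneousMeasure μ D) (hμ₀ : μ ≠ 0) (hD₀ : 0 < D) (hp : 1 < p)
    (hf : ContDiff ℝ 1 f) (hsupp : HasCompactSupport f) (h_norm : ∫ x, |f x| ^ p ∂μ = 1) :
    ∫ x, |f x| ^ p * log (|f x| ^ p) ∂μ ≤
      D / p * log (logSobolevConst p D (μ.real (Metric.ball 0 1)) *
        ∫ x, ‖fderiv ℝ f x‖ ^ p ∂μ) := by
  have hp₀ : 0 < p := by linarith
  have hp' : 0 < p - 1 := by linarith
  have hq := (HolderConjugate.conjExponent hp).symm.pos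
  have hβ : 0 < μ.real (Metric.ball 0 1) := ENNReal.toReal_pos (hD.measure_ball_pos hμ₀ one_pos).ne'
    measure_ball_lt_top.ne
  have h_Gamma : 0 < Gamma (1 + D / conjExponent p) := Gamma_pos_of_pos (by positivity)
  obtain ⟨h_pos, h_le⟩ := pos_and_le_of_forall_le_add_mul_exp hD₀ hp₀ (by positivity)
    (integral_rpow_mul_log_le_add_exp hμ hD hμ₀ hD₀ (HolderConjugate.conjExponent hp) hf hsupp
      h_norm)
  have h_grad : 0 < ∫ x, ‖fderiv ℝ f x‖ ^ p ∂μ := pos_of_mul_pos_right h_pos (by positivity)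
  refine h_le.trans_eq ?_
  rw [log_mul (logSobolevConst_pos hp hD₀ hβ).ne' h_grad.ne', log_logSobolevConst hp hD₀ hβ,
    log_mul h_Gamma.ne' hβ.ne', conjExponent, log_div hp₀.ne' hp'.ne',
    log_div (by positivity) hD₀.ne', log_mul hp₀.ne' h_pos.ne', log_mul (by positivity) h_grad.ne',
    log_rpow hp₀, log_div hp₀.ne' hD₀.ne']
  field_simp
  ring

end SharpInequality

section MonomialMeasure

variable {ι : Type*} [Fintype ι] {A : ι → ℝ}

theorem measurableSet_monSet (A : ι → ℝ) : MeasurableSet (monSet A) := by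
  unfold monSet
  measurability

theorem convex_monSet (A : ι → ℝ) : Convex ℝ (monSet A) := by
  intro x hx y hy a b ha hb hab i hi
  exact convex_Ioi (0 : ℝ) (hx i hi) (hy i hi) ha hb hab

theorem smul_mem_monSet_iff {a : ℝ} (ha : 0 < a) (x : EuclideanSpace ℝ ι) :
    a • x ∈ monSet A ↔ x ∈ monSet A := by
  simp [monSet, mul_pos_iff_of_pos_left ha]

theorem monWeight_nonneg (A : ι → ℝ) (x : EuclideanSpace ℝ ι) : 0 ≤ monWeight A x :=
  Finset.prod_nonneg fun _ _ => rpow_nonneg (abs_nonneg _) _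

theorem continuous_monWeight (hA : ∀ i, 0 ≤ A i) : Continuous (monWeight A) :=
  continuous_finsetProd _ fun i _ => Continuous.rpow_const (by fun_prop) fun _ => Or.inr (hA i)

theorem measurable_monWeight (A : ι → ℝ) : Measurable (monWeight A) := by
  unfold monWeight
  fun_prop

theorem monWeight_smul {a : ℝ} (ha : 0 < a) (x : EuclideanSpace ℝ ι) :
    monWeight A (a • x) = a ^ (∑ i, A i) * monWeight A x := by
  simp only [monWeight, PiLp.smul_apply, smul_eq_mul, abs_mul, abs_of_pos ha]
  rw [rpow_sum_of_pos ha, ← Finset.prod_mul_distrib]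
  exact Finset.prod_congr rfl fun i _ => mul_rpow ha.le (abs_nonneg _)

theorem monWeight_rpow_mul_rpow_le (hA : ∀ i, 0 ≤ A i) {a b : ℝ} (ha : 0 < a) (hb : 0 < b)
    (hab : a + b = 1) {x y : EuclideanSpace ℝ ι} (hx : x ∈ monSet A) (hy : y ∈ monSet A) :
    monWeight A x ^ a * monWeight A y ^ b ≤ monWeight A (a • x + b • y) := by
  unfold monWeight
  rw [← finsetProd_rpow _ _ fun i _ => rpow_nonneg (abs_nonneg _) _,
    ← finsetProd_rpow _ _ fun i _ => rpow_nonneg (abs_nonneg _) _, ← Finset.prod_mul_distrib]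
  refine Finset.prod_le_prod (fun i _ => by positivity) fun i _ => ?_
  rcases (hA i).eq_or_lt with h | h
  · simp [← h]
  · have hxi := hx i h
    have hyi := hy i h
    calc (|x i| ^ A i) ^ a * (|y i| ^ A i) ^ b = (x i ^ a * y i ^ b) ^ A i := by
          rw [abs_of_pos hxi, abs_of_pos hyi, mul_rpow (by positivity) (by positivity),
            ← rpow_mul hxi.le, ← rpow_mul hyi.le, ← rpow_mul hxi.le, ← rpow_mul hyi.le,
            mul_comm a, mul_comm b]
      _ ≤ (a * x i + b * y i) ^ A i := by
          gcongr
          exact geom_mean_le_arith_mean2_weighted ha.le hb.le hxi.le hyi.le hab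
      _ = |(a • x + b • y) i| ^ A i := by
          rw [PiLp.add_apply, PiLp.smul_apply, PiLp.smul_apply, smul_eq_mul, smul_eq_mul,
            abs_of_pos (by positivity)]

/-- The measure `x ^ A dx` on the region `monSet A`. -/
def monMeasure (A : ι → ℝ) : Measure (EuclideanSpace ℝ ι) :=
  volume.withDensity ((monSet A).indicator fun x => ENNReal.ofReal (monWeight A x))

theorem measurable_indicator_monWeight (A : ι → ℝ) :
    Measurable ((monSet A).indicator fun x => ENNReal.ofReal (monWeight A x)) :=
  (measurable_monWeight A).ennreal_ofReal.indicator (measurableSet_monSet A)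

theorem integral_monMeasure (φ : EuclideanSpace ℝ ι → ℝ) :
    ∫ x, φ x ∂monMeasure A = ∫ x in monSet A, φ x * monWeight A x := by
  rw [monMeasure, withDensity_indicator (measurableSet_monSet A),
    integral_withDensity_eq_integral_toReal_smul (measurable_monWeight A).ennreal_ofReal
      (Eventually.of_forall fun x => ENNReal.ofReal_lt_top)]
  simp only [ENNReal.toReal_ofReal (monWeight_nonneg A _), smul_eq_mul, mul_comm]

theorem isLocallyFiniteMeasure_monMeasure (hA : ∀ i, 0 ≤ A i) :
    IsLocallyFiniteMeasure (monMeasure A) := by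
  have := IsLocallyFiniteMeasure.withDensity_ofReal
    (μ := (volume : Measure (EuclideanSpace ℝ ι))) (continuous_monWeight hA)
  rw [monMeasure, withDensity_indicator (measurableSet_monSet A),
    ← restrict_withDensity (measurableSet_monSet A)]
  infer_instance

theorem prekopaLeindler_monMeasure (hA : ∀ i, 0 ≤ A i) : PrekopaLeindler (monMeasure A) := by
  refine prekopaLeindler_volume.withDensity (measurable_indicator_monWeight A)
    fun a b ha hb hab x y => ?_
  by_cases hx : x ∈ monSet A
  · by_cases hy : y ∈ monSet A
    · rw [Set.indicator_of_mem hx, Set.indicator_of_mem hy,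
        Set.indicator_of_mem (convex_monSet A hx hy ha.le hb.le hab),
        ENNReal.ofReal_rpow_of_nonneg (monWeight_nonneg A x) ha.le,
        ENNReal.ofReal_rpow_of_nonneg (monWeight_nonneg A y) hb.le,
        ← ENNReal.ofReal_mul (rpow_nonneg (monWeight_nonneg A x) a)]
      exact ENNReal.ofReal_le_ofReal (monWeight_rpow_mul_rpow_le hA ha hb hab hx hy)
    · simp [hy, hb]
  · simp [hx, ha]

theorem isHomogeneousMeasure_monMeasure (A : ι → ℝ) :
    IsHomogeneousMeasure (monMeasure A) (monDim A) := by
  rw [monDim, ← finrank_euclideanSpace (𝕜 := ℝ) (ι := ι)]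
  refine (isHomogeneousMeasure_addHaar volume).withDensity (measurable_indicator_monWeight A)
    fun a ha x => ?_
  by_cases hx : x ∈ monSet A
  · rw [Set.indicator_of_mem ((smul_mem_monSet_iff ha x).2 hx), Set.indicator_of_mem hx,
      monWeight_smul ha, ENNReal.ofReal_mul (by positivity)]
  · simp [hx, smul_mem_monSet_iff ha x]

theorem setIntegral_abs_rpow_mul_exp_neg_sq {a : ℝ} (ha : 0 ≤ a) :
    ∫ s in {s : ℝ | 0 < a → 0 < s}, exp (-s ^ 2) * |s| ^ a =
      Gamma ((a + 1) / 2) / if 0 < a then 2 else 1 := by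
  rcases ha.eq_or_lt with rfl | ha
  · simpa [← Gamma_one_half_eq] using integral_gaussian 1
  · have h_Ioi : {s : ℝ | 0 < a → 0 < s} = Set.Ioi 0 := by ext s; simp [ha]
    rw [h_Ioi, setIntegral_congr_fun (g := fun s : ℝ => s ^ a * exp (-s ^ (2 : ℝ)))
      measurableSet_Ioi fun s hs => by simp [abs_of_pos (Set.mem_Ioi.1 hs), mul_comm],
      integral_rpow_mul_exp_neg_rpow two_pos (by linarith), if_pos ha]
    ring

theorem integral_exp_neg_norm_sq_monMeasure (hA : ∀ i, 0 ≤ A i) :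
    ∫ x, exp (-‖x‖ ^ 2) ∂monMeasure A = (∏ i, Gamma ((A i + 1) / 2)) / 2 ^ monK A := by
  have h_preimage : WithLp.toLp 2 ⁻¹' monSet A =
      Set.univ.pi fun i => {s : ℝ | 0 < A i → 0 < s} := by
    ext x
    simp [monSet]
  have h_two : ∏ i, (if 0 < A i then 2 else 1 : ℝ) = 2 ^ monK A := by
    rw [Finset.prod_ite, monK, Nat.card_eq_fintype_card, Fintype.card_subtype]
    simp
  rw [integral_monMeasure, ← (PiLp.volume_preserving_toLp ι).setIntegral_preimage_emb
    (MeasurableEquiv.toLp 2 _).measurableEmbedding, h_preimage, volume_pi,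
    Measure.restrict_pi_pi, ← h_two, ← Finset.prod_div_distrib]
  simp only [← setIntegral_abs_rpow_mul_exp_neg_sq (hA _)]
  rw [← integral_fintype_prod_eq_prod]
  refine integral_congr_ae (Eventually.of_forall fun x => ?_)
  simp [monWeight, EuclideanSpace.norm_sq_eq, ← Finset.sum_neg_distrib, exp_sum,
    Finset.prod_mul_distrib]

theorem monDim_nonneg (hA : ∀ i, 0 ≤ A i) : 0 ≤ monDim A :=
  add_nonneg (Nat.cast_nonneg _) (Finset.sum_nonneg fun i _ => hA i)

theorem monMeasure_real_ball_one (hA : ∀ i, 0 ≤ A i) :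
    (monMeasure A).real (Metric.ball 0 1) =
      (∏ i, Gamma ((A i + 1) / 2)) / (2 ^ monK A * Gamma (1 + monDim A / 2)) := by
  have hD : 0 < 1 + monDim A / 2 := by linarith [monDim_nonneg hA]
  have := isLocallyFiniteMeasure_monMeasure hA
  have h_gaussian := (isHomogeneousMeasure_monMeasure A).integral_exp_neg_norm_rpow one_pos
    two_pos hD
  simp only [one_mul, rpow_two, one_rpow, integral_exp_neg_norm_sq_monMeasure hA] at h_gaussian
  rw [← div_div, h_gaussian, mul_div_cancel_left₀ _ (Gamma_pos_of_pos hD).ne']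

theorem monMeasure_real_ball_one_pos (hA : ∀ i, 0 ≤ A i) :
    0 < (monMeasure A).real (Metric.ball 0 1) := by
  rw [monMeasure_real_ball_one hA]
  have h_prod : 0 < ∏ i, Gamma ((A i + 1) / 2) :=
    Finset.prod_pos fun i _ => Gamma_pos_of_pos (by linarith [hA i])
  have h_Gamma : 0 < Gamma (1 + monDim A / 2) :=
    Gamma_pos_of_pos (by linarith [monDim_nonneg hA])
  positivity

theorem monMeasure_ne_zero (hA : ∀ i, 0 ≤ A i) : monMeasure A ≠ 0 := fun h_zero => by
  simpa [h_zero] using monMeasure_real_ball_one_pos hA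

theorem monC1_eq (hA : ∀ i, 0 ≤ A i) :
    monC1 A = (monDim A)⁻¹ * (monMeasure A).real (Metric.ball 0 1) ^ (-(1 / monDim A)) := by
  rw [rpow_neg measureReal_nonneg, ← inv_rpow measureReal_nonneg, monMeasure_real_ball_one hA,
    inv_div, monC1]

end MonomialMeasure

section ConstantComparison

theorem differentiableAt_log_comp_Gamma {x : ℝ} (hx : 0 < x) :
    DifferentiableAt ℝ (log ∘ Gamma) x :=
  DifferentiableAt.log (differentiableAt_Gamma fun m => by linarith [m.cast_nonneg (α := ℝ)])
    (Gamma_pos_of_pos hx).ne'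

theorem log_sub_one_le_deriv_log_comp_Gamma {x : ℝ} (hx : 1 < x) :
    log (x - 1) ≤ deriv (log ∘ Gamma) x := by
  have hx' : 0 < x - 1 := sub_pos.2 hx
  have h_slope := convexOn_log_Gamma.slope_le_of_hasDerivAt hx' (by exact zero_lt_one.trans hx)
    (sub_one_lt x) (differentiableAt_log_comp_Gamma (zero_lt_one.trans hx)).hasDerivAt
  have h_Gamma : log (Gamma x) = log (x - 1) + log (Gamma (x - 1)) := by
    rw [← log_mul hx'.ne' (Gamma_pos_of_pos hx').ne', ← Gamma_add_one hx'.ne', sub_add_cancel]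
  rwa [slope_def_field, sub_sub_cancel, div_one, Function.comp_apply, Function.comp_apply, h_Gamma,
    add_sub_cancel_right] at h_slope

theorem hasDerivAt_log_Gamma_mul_sub {a b s : ℝ} (ha : 0 < a) (hs : 0 < s) :
    HasDerivAt (fun s => log (Gamma (a * s)) - (a * (s * log s) + a * (s - 1) * (b - 1)))
      (a * (deriv (log ∘ Gamma) (a * s) - (log s + b))) s := by
  have h_Gamma : HasDerivAt (fun s => log (Gamma (a * s))) (deriv (log ∘ Gamma) (a * s) * a) s := by
    simpa [Function.comp_def] using
      HasDerivAt.comp s (differentiableAt_log_comp_Gamma (mul_pos ha hs)).hasDerivAt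
        ((hasDerivAt_id s).const_mul a)
  have h_linear : HasDerivAt (fun s => a * (s - 1) * (b - 1)) (a * (b - 1)) s := by
    simpa using (((hasDerivAt_id s).sub_const 1).const_mul a).mul_const (b - 1)
  refine (h_Gamma.sub (((hasDerivAt_mul_log hs.ne').const_mul a).add h_linear)).congr_deriv ?_
  ring

theorem log_Gamma_add_le_log_Gamma_mul {a p : ℝ} (ha : 1 < a) (hp : 1 ≤ p) :
    log (Gamma a) + a * p * log p + a * (p - 1) * (log (a - 1) - 1) ≤ log (Gamma (a * p)) := by
  have ha₀ : 0 < a := zero_lt_one.trans ha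
  have h_deriv {s : ℝ} (hs : 1 ≤ s) :=
    hasDerivAt_log_Gamma_mul_sub (b := log (a - 1)) ha₀ (zero_lt_one.trans_le hs)
  have h_mono := monotoneOn_of_hasDerivWithinAt_nonneg (convex_Ici (1 : ℝ))
    (fun s hs => (h_deriv hs).continuousAt.continuousWithinAt)
    (fun s hs => (h_deriv (interior_subset hs)).hasDerivWithinAt) fun s hs => by
      have hs₁ : 1 ≤ s := interior_subset hs
      have h_log : log s + log (a - 1) ≤ log (a * s - 1) := by
        rw [← log_mul (by linarith) (by linarith)]
        exact log_le_log (mul_pos (by linarith) (by linarith)) (by linarith)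
      have h_psi := log_sub_one_le_deriv_log_comp_Gamma (one_lt_mul_of_lt_of_le ha hs₁)
      exact mul_nonneg ha₀.le (sub_nonneg.2 (h_log.trans h_psi))
  have h_le := h_mono Set.self_mem_Ici hp hp
  simp only [mul_one, log_one, mul_zero, sub_self, zero_mul, add_zero, sub_zero] at h_le
  linarith

variable {ι : Type*} [Fintype ι] {A : ι → ℝ} {p : ℝ}

theorem monCp_pos (hA : ∀ i, 0 ≤ A i) (hp : 1 < p) (hpD : p < monDim A) : 0 < monCp A p := by
  have hD : 0 < monDim A := by linarith
  have hp' : 0 < p - 1 := by linarith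
  have hDp : 0 < monDim A - p := by linarith
  have hβ := monMeasure_real_ball_one_pos hA
  have h_Gamma_D := Gamma_pos_of_pos hD
  have h_Gamma_Dp : 0 < Gamma (monDim A / p) := Gamma_pos_of_pos (by positivity)
  have h_Gamma_Dq : 0 < Gamma (monDim A / (p / (p - 1))) := Gamma_pos_of_pos (by positivity)
  rw [monCp, monC1_eq hA]
  positivity

theorem monDim_mul_log_monCp (hA : ∀ i, 0 ≤ A i) (hp : 1 < p) (hpD : p < monDim A) :
    monDim A * log (monCp A p) = -log ((monMeasure A).real (Metric.ball 0 1)) -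
      (monDim A / p + 1) * log (monDim A) +
      monDim A / conjExponent p * (log (p - 1) - log (monDim A - p)) + log (conjExponent p) +
      log (Gamma (monDim A)) - log (Gamma (monDim A / p)) -
      log (Gamma (monDim A / conjExponent p)) := by
  have hD : 0 < monDim A := by linarith
  have hp' : 0 < p - 1 := by linarith
  have hDp : 0 < monDim A - p := by linarith
  have hq := (HolderConjugate.conjExponent hp).symm.pos
  have hβ := monMeasure_real_ball_one_pos hA
  have h_Gamma_D := Gamma_pos_of_pos hD
  have h_Gamma_Dp : 0 < Gamma (monDim A / p) := Gamma_pos_of_pos (by positivity)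
  have h_Gamma_Dq : 0 < Gamma (monDim A / conjExponent p) := Gamma_pos_of_pos (by positivity)
  rw [monCp, monC1_eq hA, ← conjExponent, log_mul (by positivity) (by positivity),
    log_mul (by positivity) (by positivity), log_mul (by positivity) (by positivity),
    log_mul (by positivity) (by positivity), log_inv, log_rpow hβ, log_rpow hD,
    log_rpow (by positivity), log_rpow (by positivity), log_div hp'.ne' hDp.ne',
    log_div (by positivity) (by positivity), log_mul hq.ne' h_Gamma_D.ne',
    log_mul h_Gamma_Dp.ne' h_Gamma_Dq.ne']
  field_simp
  ring

-- After taking logarithms, this is `log_Gamma_add_le_log_Gamma_mul` with `a = D / p`.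
theorem logSobolevConst_le_monCp_rpow (hA : ∀ i, 0 ≤ A i) (hp : 1 < p) (hpD : p < monDim A) :
    logSobolevConst p (monDim A) ((monMeasure A).real (Metric.ball 0 1)) ≤ monCp A p ^ p := by
  have hp₀ : 0 < p := by linarith
  have hp' : 0 < p - 1 := by linarith
  have hD : 0 < monDim A := by linarith
  have hDp : 0 < monDim A - p := by linarith
  have hq := (HolderConjugate.conjExponent hp).symm.pos
  have hβ := monMeasure_real_ball_one_pos hA
  have hC := monCp_pos hA hp hpD
  rw [← log_le_log_iff (logSobolevConst_pos hp hD hβ) (by positivity), log_rpow hC,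
    log_logSobolevConst hp hD hβ]
  have h_Gamma : log (Gamma (1 + monDim A / conjExponent p)) =
      log (monDim A) - log (conjExponent p) + log (Gamma (monDim A / conjExponent p)) := by
    rw [add_comm, Gamma_add_one (by positivity), log_mul (by positivity)
      (Gamma_pos_of_pos (by positivity)).ne', log_div hD.ne' hq.ne']
  have h_log_q : log (conjExponent p) = log p - log (p - 1) := log_div hp₀.ne' hp'.ne'
  have h_Dq : monDim A / conjExponent p = monDim A - monDim A / p := by
    rw [conjExponent]
    field_simp
  have h_bound := log_Gamma_add_le_log_Gamma_mul ((one_lt_div hp₀).2 hpD) hp.le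
  have h_log_sub : log (monDim A / p - 1) = log (monDim A - p) - log p := by
    rw [← log_div hDp.ne' hp₀.ne', sub_div, div_self hp₀.ne']
  have h_Dp : monDim A / p * (p - 1) = monDim A - monDim A / p := by field_simp
  rw [div_mul_cancel₀ _ hp₀.ne', h_log_sub, h_Dp] at h_bound
  have h_monCp := monDim_mul_log_monCp hA hp hpD
  rw [h_Gamma, log_div hp₀.ne' hD.ne']
  simp only [h_Dq, h_log_q] at h_monCp ⊢
  refine le_of_mul_le_mul_left ?_ (div_pos hD hp₀)
  have h_cancel (c : ℝ) : monDim A / p * (p * c) = monDim A * c := by field_simp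
  have h_cancel' (c : ℝ) : monDim A / p * (p / monDim A * c) = c := by field_simp
  rw [h_cancel, h_monCp, mul_sub (monDim A / p) _ (p / monDim A * _), h_cancel', mul_add,
    ← mul_assoc, h_Dp]
  linarith

theorem log_logSobolevConst_mul_le (hA : ∀ i, 0 ≤ A i) (hp : 1 < p) (hpD : p < monDim A) {x : ℝ}
    (hx : 0 ≤ x) :
    log (logSobolevConst p (monDim A) ((monMeasure A).real (Metric.ball 0 1)) * x) ≤
      log (monCp A p ^ p * x) := by
  rcases hx.eq_or_lt with rfl | hx
  · simp only [mul_zero, le_refl]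
  · have h_pos := logSobolevConst_pos hp (zero_lt_one.trans (hp.trans hpD))
      (monMeasure_real_ball_one_pos hA)
    exact log_le_log (mul_pos h_pos hx)
      (mul_le_mul_of_nonneg_right (logSobolevConst_le_monCp_rpow hA hp hpD) hx.le)

end ConstantComparison

theorem Lp_logSobolev_monomial_weight_general {ι : Type*} [Fintype ι] {A : ι → ℝ}
    (hA : ∀ i, 0 ≤ A i) {p : ℝ} (hp : 1 < p) (hD : 0 < monDim A)
    {f : EuclideanSpace ℝ ι → ℝ} (hf : ContDiff ℝ 1 f) (hsupp : HasCompactSupport f)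
    (h_norm : ∫ x in monSet A, |f x| ^ p * monWeight A x = 1) :
    ∫ x in monSet A, |f x| ^ p * log (|f x| ^ p) * monWeight A x ≤
      monDim A / p * log (logSobolevConst p (monDim A) ((monMeasure A).real (Metric.ball 0 1)) *
        ∫ x in monSet A, ‖fderiv ℝ f x‖ ^ p * monWeight A x) := by
  have := isLocallyFiniteMeasure_monMeasure hA
  simp only [← integral_monMeasure fun x => |f x| ^ p,
    ← integral_monMeasure fun x => |f x| ^ p * log (|f x| ^ p),
    ← integral_monMeasure fun x => ‖fderiv ℝ f x‖ ^ p] at h_norm ⊢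
  exact integral_rpow_mul_log_le_logSobolevConst (prekopaLeindler_monMeasure hA)
    (isHomogeneousMeasure_monMeasure A) (monMeasure_ne_zero hA) hD hp hf hsupp h_norm

end

/-- the `L^p` logarithmic Sobolev inequality with monomial weights.
(Recall `Real.log 0 = 0`, so `|f|^p log |f|^p` vanishes where `f = 0`.) -/
theorem Lp_logSobolev_monomial_weight {n : ℕ} (A : Fin n → ℝ) (hA : ∀ i, 0 ≤ A i)
    (p : ℝ) (hp1 : 1 < p) (hpD : p < monDim A)
    (f : EuclideanSpace ℝ (Fin n) → ℝ) (hf : ContDiff ℝ 1 f) (hsupp : HasCompactSupport f)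
    (hnorm : ∫ x in monSet A, |f x| ^ p * monWeight A x = 1) :
    ∫ x in monSet A, |f x| ^ p * log (|f x| ^ p) * monWeight A x ≤
      monDim A / p *
        log (monCp A p ^ p * ∫ x in monSet A, ‖fderiv ℝ f x‖ ^ p * monWeight A x) := by
  have hD : 0 < monDim A := by linarith
  refine (Lp_logSobolev_monomial_weight_general hA hp1 hD hf hsupp hnorm).trans ?_
  have h_energy : 0 ≤ ∫ x in monSet A, ‖fderiv ℝ f x‖ ^ p * monWeight A x :=
    integral_nonneg fun x => mul_nonneg (by positivity) (monWeight_nonneg A x)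
  gcongr ?_ * ?_
  exact log_logSobolevConst_mul_le hA hp1 hpD h_energy
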